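/- For every integer t ≥ 2 there exists a constant C_t such that for every integer n ≥ 1, the maximum size r_{2t+2}(n) of a family of n-permutations with VC-dimension at most 2t+2 satisfies r_{2t+2}(n) ≤ 2^{n·((2/t!)·α(n)^t + C_t·α(n)^{t−1})}. -/

import Mathlib

/-! ## Inverse Ackermann hierarchy -/

/-- Bounded-fuel iteration counter: number of applications of `f` needed to bring `m`
down to a value `≤ 1` (assuming `f` strictly decreases on values `≥ 2`). -/
def iterCount (f : ℕ → ℕ) : ℕ → ℕ → ℕ
  | 0, _ => 0
  | fuel + 1, m => if m ≤ 1 then 0 else 1 + iterCount f fuel (f m)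

/-- The inverse Ackermann hierarchy: `alphaHier 1 m = ⌈m/2⌉`, `alphaHier d 1 = 0` for `d ≥ 2`,
and `alphaHier d m = 1 + alphaHier d (alphaHier (d-1) m)` for `m, d ≥ 2`. -/
def alphaHier : ℕ → ℕ → ℕ
  | 0, m => m
  | 1, m => (m + 1) / 2
  | d + 2, m => iterCount (alphaHier (d + 1)) m m

/-- The inverse Ackermann function `α(m) = min {k ≥ 1 : α_k(m) ≤ 3}`. -/
noncomputable def invAck (m : ℕ) : ℕ := sInf {k : ℕ | 1 ≤ k ∧ alphaHier k m ≤ 3}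

/-! ## Permutations, restrictions, VC-dimension -/

/-- The restriction of the `n`-permutation `π` to the (increasing) `k`-tuple of positions `a`
is the `k`-permutation `σ`. -/
def PermRestrictionIs {n k : ℕ} (π : Equiv.Perm (Fin n)) (a : Fin k → Fin n)
    (σ : Equiv.Perm (Fin k)) : Prop :=
  ∀ i j : Fin k, σ i < σ j ↔ π (a i) < π (a j)

/-- The `k`-tuple of positions `a` is shattered by the family `P` of `n`-permutations. -/
def Shatters {n k : ℕ} (P : Finset (Equiv.Perm (Fin n))) (a : Fin k → Fin n) : Prop :=
  StrictMono a ∧ ∀ σ : Equiv.Perm (Fin k), ∃ π ∈ P, PermRestrictionIs π a σ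

/-- The family `P` of `n`-permutations has VC-dimension at most `k`:
no `(k+1)`-tuple of positions is shattered by `P`. -/
def VCDimLE (n k : ℕ) (P : Finset (Equiv.Perm (Fin n))) : Prop :=
  ∀ a : Fin (k + 1) → Fin n, ¬ Shatters P a

/-- The number of `1`-entries of the union of the permutation matrices of a family `P`
of `n`-permutations. -/
noncomputable def permOnes {n : ℕ} (P : Finset (Equiv.Perm (Fin n))) : ℕ :=
  Nat.card {p : Fin n × Fin n // ∃ π ∈ P, π p.2 = p.1}

/-- `v(P) = |M_P| / n`, the average number of `1`-entries per column of the union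
of the permutation matrices of the family `P`. -/
noncomputable def vPerm {n : ℕ} (P : Finset (Equiv.Perm (Fin n))) : ℝ :=
  (permOnes P : ℝ) / (n : ℝ)

/-! ## (0,1)-matrices -/

/-- The number of `1`-entries of a `(0,1)`-matrix (represented as a `Bool` matrix). -/
noncomputable def matOnes {m n : ℕ} (M : Fin m → Fin n → Bool) : ℕ :=
  Nat.card {p : Fin m × Fin n // M p.1 p.2 = true}

/-- The number of `1`-entries in column `j` of a `(0,1)`-matrix. -/
noncomputable def colOnes {m n : ℕ} (M : Fin m → Fin n → Bool) (j : Fin n) : ℕ :=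
  Nat.card {i : Fin m // M i j = true}

/-- The matrix `B` contains the matrix `S`. -/
def MatContains {m n p q : ℕ} (B : Fin m → Fin n → Bool) (S : Fin p → Fin q → Bool) : Prop :=
  ∃ (r : Fin p → Fin m) (c : Fin q → Fin n), StrictMono r ∧ StrictMono c ∧
    ∀ a b, S a b = true → B (r a) (c b) = true

/-- The `s × 2` matrix `DS_s`, with a `1`-entry in (1-indexed) row `i` and column `j`
exactly when `i + j` is odd. -/
def DS (s : ℕ) : Fin s → Fin 2 → Bool :=
  fun i j => decide ((i.val + j.val) % 2 = 1)

/-- The maximum number of `1`-entries in an `n × n` matrix avoiding `S`. -/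
noncomputable def exMat {p q : ℕ} (S : Fin p → Fin q → Bool) (n : ℕ) : ℕ :=
  sSup {x : ℕ | ∃ M : Fin n → Fin n → Bool, ¬ MatContains M S ∧ matOnes M = x}

/-- An `n × n` matrix is `k`-full if some increasing `k`-tuple of columns contains
every `k`-permutation matrix. -/
def IsFull (k : ℕ) {n : ℕ} (M : Fin n → Fin n → Bool) : Prop :=
  ∃ c : Fin k → Fin n, StrictMono c ∧ ∀ σ : Equiv.Perm (Fin k),
    ∃ r : Fin k → Fin n, StrictMono r ∧ ∀ b : Fin k, M (r (σ b)) (c b) = true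

/-- `pFull k n` is the maximum number of `1`-entries in an `n × n` matrix that is
not `(k+1)`-full. -/
noncomputable def pFull (k n : ℕ) : ℕ :=
  sSup {x : ℕ | ∃ M : Fin n → Fin n → Bool, ¬ IsFull (k + 1) M ∧ matOnes M = x}

/-! ## Formations -/

/-- `M` contains a `B`-fat `(r,s)`-formation: there are an `s`-partition of the rows into
intervals (the fibers of a monotone map `g`) and `r` columns, each having at least `B`
`1`-entries in every interval. -/
def FatFormation (B r s : ℕ) {m n : ℕ} (M : Fin m → Fin n → Bool) : Prop :=
  ∃ g : Fin m → Fin s, Monotone g ∧ ∃ c : Fin r → Fin n, StrictMono c ∧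
    ∀ (j : Fin r) (i : Fin s), B ≤ Nat.card {x : Fin m // g x = i ∧ M x (c j) = true}

/-- `M` contains a doubled `(r,s)`-formation: there are an `s`-partition of the rows into
intervals and `r` columns, each having at least one `1`-entry in the first and last
interval and at least two `1`-entries in every other interval. -/
def DoubledFormation (r s : ℕ) {m n : ℕ} (M : Fin m → Fin n → Bool) : Prop :=
  ∃ g : Fin m → Fin s, Monotone g ∧ ∃ c : Fin r → Fin n, StrictMono c ∧
    ∀ (j : Fin r) (i : Fin s),
      1 ≤ Nat.card {x : Fin m // g x = i ∧ M x (c j) = true} ∧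
      (i.val ≠ 0 → i.val ≠ s - 1 → 2 ≤ Nat.card {x : Fin m // g x = i ∧ M x (c j) = true})

/-! ## The functions R, D, β -/

/-- Nivasch's hierarchy `R_s(d)` (shifted as in the paper). -/
def Rfun : ℕ → ℕ → ℕ
  | 0, _ => 0
  | 1, _ => 0
  | 2, _ => 2
  | 3, _ => 3
  | 4, d => 2 * d + 1
  | _ + 5, 0 => 0
  | _ + 5, 1 => 0
  | s + 5, 2 => 2 ^ (s + 3) + 1
  | s + 5, d + 3 =>
      2 * (Rfun (s + 4) (d + 3) - 1) + (Rfun (s + 3) (d + 3) - 1) * (Rfun (s + 5) (d + 2) - 3) + 1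
  termination_by s d => (s, d)

/-- The hierarchy `D_s(d)`. -/
def Dfun : ℕ → ℕ → ℕ
  | 0, _ => 0
  | 1, _ => 0
  | 2, _ => 2
  | _ + 3, 0 => 0
  | _ + 3, 1 => 0
  | s + 3, 2 => 2 ^ (s + 2) + 2 ^ (s + 1) - 1
  | s + 3, d + 3 =>
      2 * Dfun (s + 2) (d + 3) + (Dfun (s + 1) (d + 3) + 1) * (Rfun (s + 3) (d + 2) - 3)
        + Dfun (s + 3) (d + 2) - Rfun (s + 3) (d + 2) + 1
  termination_by s d => (s, d)

/-- `β_s(m) = D_s(α(m))`. -/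
noncomputable def betaFun (s m : ℕ) : ℕ := Dfun s (invAck m)

/-! ## Sequences: MST and formations in sequences -/

/-- The list of column indices of the `1`-entries of a row, in increasing order. -/
def rowList {n : ℕ} (row : Fin n → Bool) : List (Fin n) :=
  (List.finRange n).filter (fun j => row j)

/-- The matrix → sequence transformation: read the rows top to bottom, writing for each
`1`-entry the index of its column. -/
def MST {m n : ℕ} (M : Fin m → Fin n → Bool) : List (Fin n) :=
  ((List.finRange m).map (fun i => rowList (M i))).flatten

/-- The list `L` contains an `(r,s)`-formation as a subsequence: a concatenation of `s`
permutations of the same `r`-element set of symbols is a sublist of `L`. -/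
def IsFormationSeq {A : Type*} [DecidableEq A] (r s : ℕ) (L : List A) : Prop :=
  ∃ (T : Finset A) (F : List (List A)), T.card = r ∧ F.length = s ∧
    (∀ l ∈ F, l.Nodup ∧ l.toFinset = T) ∧ List.Sublist F.flatten L

section MainProof
open Finset

/-- at most `B` columns are full with respect to any division of the rows into `s` intervals -/
def NF {γ : Type} (s B : ℕ) (C : Finset γ) (S : γ → Finset ℕ) : Prop :=
  ∀ x : ℕ → ℕ, Monotone x →
    ∀ D : Finset γ, D ⊆ C → (∀ c ∈ D, ∀ i < s, ∃ v ∈ S c, x i ≤ v ∧ v < x (i+1)) → D.card ≤ B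

/-- linear bound for `s`-formation-free matrices with `m` rows -/
def Bd (γ : Type) (s m P q : ℕ) : Prop :=
  ∀ (B a : ℕ) (C : Finset γ) (S : γ → Finset ℕ), (∀ c ∈ C, S c ⊆ Finset.Ico a (a+m)) →
    NF s B C S → ∑ c ∈ C, (S c).card ≤ P * B * m + q * C.card

theorem NF.mono {γ : Type} {s B : ℕ} {C C' : Finset γ} {S S' : γ → Finset ℕ} (h : NF s B C S)
    (hC : C' ⊆ C) (hS : ∀ c ∈ C', S' c ⊆ S c) : NF s B C' S' := by
  intro x hx D hD hf
  refine h x hx D (hD.trans hC) fun c hc i hi => ?_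
  obtain ⟨v, hv, h1⟩ := hf c hc i hi
  exact ⟨v, hS c (hD hc) hv, h1⟩

theorem NF.append {γ : Type} {s B : ℕ} {C C' : Finset γ} {S S' : γ → Finset ℕ}
    (h : NF (s+1) B C S) (hi : ℕ)
    (hC : C' ⊆ C) (hS : ∀ c ∈ C', S' c ⊆ S c) (hlt : ∀ c ∈ C', ∀ v ∈ S' c, v < hi)
    (hex : ∀ c ∈ C', ∃ v ∈ S c, hi ≤ v) : NF s B C' S' := by
  intro x hx D hD hf
  -- upper bound on all values
  obtain ⟨U, hU⟩ : ∃ U, ∀ c ∈ D, ∀ v ∈ S c, v < U := by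
    refine ⟨(D.sup fun c => (S c).sup id) + 1, fun c hc v hv => ?_⟩
    have h1 : v ≤ (S c).sup id := Finset.le_sup (f := id) hv
    have h2 : (S c).sup id ≤ D.sup fun c => (S c).sup id :=
      Finset.le_sup (f := fun c => (S c).sup id) hc
    omega
  refine h (fun i => if i ≤ s then min (x i) hi else max U hi) ?_ D (hD.trans hC) ?_
  · intro i j hij
    dsimp only
    have := hx hij
    split_ifs <;> omega
  · intro c hc i his
    rcases Nat.lt_succ_iff_lt_or_eq.mp his with h1 | h1
    · obtain ⟨v, hv, h2, h3⟩ := hf c hc i h1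
      have := hlt c (hD hc) v hv
      refine ⟨v, hS c (hD hc) hv, ?_⟩
      rw [if_pos (by omega), if_pos (by omega)]
      omega
    · obtain ⟨v, hv, h2⟩ := hex c (hD hc)
      have := hU c hc v hv
      refine ⟨v, hv, ?_⟩
      rw [if_pos (by omega), if_neg (by omega)]
      omega

theorem NF.prepend {γ : Type} {s B : ℕ} {C C' : Finset γ} {S S' : γ → Finset ℕ}
    (h : NF (s+1) B C S) (lo : ℕ)
    (hC : C' ⊆ C) (hS : ∀ c ∈ C', S' c ⊆ S c) (hlt : ∀ c ∈ C', ∀ v ∈ S' c, lo ≤ v)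
    (hex : ∀ c ∈ C', ∃ v ∈ S c, v < lo) : NF s B C' S' := by
  intro x hx D hD hf
  refine h (fun i => if i = 0 then 0 else max (x (i-1)) lo) ?_ D (hD.trans hC) ?_
  · intro i j hij
    dsimp only
    have := @hx (i-1) (j-1) (by omega)
    split_ifs <;> omega
  · intro c hc i his
    rcases Nat.eq_zero_or_pos i with h1 | h1
    · obtain ⟨v, hv, h2⟩ := hex c (hD hc)
      refine ⟨v, hv, ?_⟩
      rw [if_pos (by omega), if_neg (by omega)]
      omega
    · obtain ⟨v, hv, h2, h3⟩ := hf c hc (i-1) (by omega)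
      have := hlt c (hD hc) v hv
      refine ⟨v, hS c (hD hc) hv, ?_⟩
      rw [if_neg (by omega), if_neg (by omega)]
      have e : i + 1 - 1 = i - 1 + 1 := by omega
      rw [e]
      omega

theorem Bd.mono {γ : Type} {s m P q P' q' : ℕ} (h : Bd γ s m P q) (hP : P ≤ P') (hq : q ≤ q') :
    Bd γ s m P' q' := by
  intro B a C S h1 h2
  refine (h B a C S h1 h2).trans ?_
  gcongr

theorem Bd_zero (γ : Type) (m : ℕ) : Bd γ 0 m 1 0 := by
  intro B a C S h1 h2
  have h3 : C.card ≤ B := h2 id monotone_id C (Finset.Subset.refl _) (by simp)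
  have h4 : ∀ c ∈ C, (S c).card ≤ m := fun c hc => by
    simpa using Finset.card_le_card (h1 c hc)
  have := Finset.sum_le_card_nsmul C _ m h4
  rw [smul_eq_mul] at this
  nlinarith

theorem Bd_one (γ : Type) (m : ℕ) : Bd γ 1 m 1 0 := by
  classical
  intro B a C S h1 h2
  have h3 : (C.filter fun c => (S c).Nonempty).card ≤ B := by
    refine h2 (fun i => if i = 0 then a else a + m) ?_ _ (Finset.filter_subset _ _) ?_
    · intro i j hij
      dsimp only
      split_ifs <;> omega
    · intro c hc i hi
      obtain ⟨hc, v, hv⟩ := Finset.mem_filter.mp hc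
      have := Finset.mem_Ico.mp (h1 c hc hv)
      obtain rfl : i = 0 := by omega
      exact ⟨v, hv, by simpa using this⟩
  have h4 : ∀ c ∈ C, (S c).card ≤ m := fun c hc => by
    simpa using Finset.card_le_card (h1 c hc)
  have h5 : ∑ c ∈ C, (S c).card = ∑ c ∈ C.filter fun c => (S c).Nonempty, (S c).card := by
    symm
    apply Finset.sum_filter_of_ne
    intro c _ h
    exact Finset.card_ne_zero.mp h
  have := Finset.sum_le_card_nsmul (C.filter fun c => (S c).Nonempty) (fun c => (S c).card) m
    (fun c hc => h4 c (Finset.mem_filter.mp hc).1)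
  rw [smul_eq_mul] at this
  rw [h5]
  nlinarith

theorem Bd_triv (γ : Type) (s m P : ℕ) : Bd γ s m P m := by
  intro B a C S h1 _
  have h4 : ∀ c ∈ C, (S c).card ≤ m := fun c hc => by
    simpa using Finset.card_le_card (h1 c hc)
  have := Finset.sum_le_card_nsmul C _ m h4
  rw [smul_eq_mul] at this
  exact this.trans (by rw [mul_comm]; exact Nat.le_add_left _ _)

theorem sum_groups (W m b : ℕ) : ∑ i ∈ Finset.range b, min W (m - i * W) = min (b * W) m := by
  induction b with
  | zero => simp
  | succ b ih => rw [Finset.sum_range_succ, ih, Nat.succ_mul]; omega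

theorem Bd_step {γ : Type} {s m W b P2 P1 P0 Pc q2 q1 q0 qc : ℕ} (hW : 0 < W) (hb : m ≤ b * W)
    (h2 : ∀ m' ≤ W, Bd γ (s+2) m' P2 q2) (h1 : ∀ m' ≤ W, Bd γ (s+1) m' P1 q1)
    (h0 : ∀ m' ≤ W, Bd γ s m' P0 q0) (hc : Bd γ (s+2) b Pc qc)
    (hq : 2 * q1 + q0 * qc ≤ q2) (B a : ℕ) (C : Finset γ) (S : γ → Finset ℕ)
    (hS : ∀ c ∈ C, S c ⊆ Finset.Ico a (a+m)) (hN : NF (s+2) B C S) :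
    ∑ c ∈ C, (S c).card ≤ (P2 + 2 * P1 + P0) * B * m + q0 * Pc * B * b + q2 * C.card := by
  classical
  set G : ℕ → ℕ := fun v => (v - a) / W with hG
  have hGlt : ∀ v i, G v < i → v < a + i * W := by
    intro v i h
    have := (Nat.div_lt_iff_lt_mul hW).mp h
    omega
  have hGge : ∀ v i, a ≤ v → i ≤ G v → a + i * W ≤ v := by
    intro v i hv h
    have := (Nat.le_div_iff_mul_le hW).mp h
    omega
  have hva : ∀ c ∈ C, ∀ v ∈ S c, a ≤ v ∧ v < a + m := fun c hc v hv =>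
    Finset.mem_Ico.mp (hS c hc hv)
  set Si : ℕ → γ → Finset ℕ := fun i c => (S c).filter fun v => G v = i with hSi
  have hSisub : ∀ i, ∀ c ∈ C, Si i c ⊆ Finset.Ico (a + i * W) (a + i * W + min W (m - i * W)) := by
    intro i c hc v hv
    obtain ⟨hv, hvi⟩ := Finset.mem_filter.mp hv
    have h3 := hGge v i (hva c hc v hv).1 hvi.ge
    have h4 := hGlt v (i+1) (by omega)
    have h5 := (hva c hc v hv).2
    rw [Nat.succ_mul] at h4
    rw [Finset.mem_Ico]
    omega
  set T : γ → Finset ℕ := fun c => (S c).image G with hT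
  have hTb : ∀ c ∈ C, T c ⊆ Finset.range b := by
    intro c hc i hi
    obtain ⟨v, hv, rfl⟩ := Finset.mem_image.mp hi
    have := hva c hc v hv
    rw [Finset.mem_range]
    apply (Nat.div_lt_iff_lt_mul hW).mpr
    omega
  set Lo : ℕ → γ → Prop := fun i c => ∃ u ∈ S c, G u < i
  set Hi : ℕ → γ → Prop := fun i c => ∃ u ∈ S c, i < G u
  set In : ℕ → γ → Prop := fun i c => ∃ u ∈ S c, G u = i
  set L : ℕ → Finset γ := fun i => C.filter fun c => In i c ∧ ¬ Lo i c ∧ ¬ Hi i c with hL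
  set St : ℕ → Finset γ := fun i => C.filter fun c => In i c ∧ ¬ Lo i c ∧ Hi i c with hSt
  set En : ℕ → Finset γ := fun i => C.filter fun c => In i c ∧ Lo i c ∧ ¬ Hi i c with hEn
  set Mi : ℕ → Finset γ := fun i => C.filter fun c => In i c ∧ Lo i c ∧ Hi i c with hMi
  set Cg : Finset γ := C.filter fun c => ∃ u ∈ S c, ∃ v ∈ S c, G u ≠ G v with hCg
  have hsum : ∑ c ∈ C, (S c).card = ∑ i ∈ Finset.range b, ∑ c ∈ C, (Si i c).card := by
    rw [Finset.sum_comm]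
    refine Finset.sum_congr rfl fun c hc => ?_
    refine Finset.card_eq_sum_card_fiberwise fun v hv => ?_
    exact hTb c hc (Finset.mem_image_of_mem _ hv)
  have hsplit : ∀ i, ∑ c ∈ C, (Si i c).card =
      ∑ c ∈ L i, (Si i c).card + ∑ c ∈ St i, (Si i c).card + ∑ c ∈ En i, (Si i c).card
        + ∑ c ∈ Mi i, (Si i c).card := by
    intro i
    simp only [hL, hSt, hEn, hMi, Finset.sum_filter, ← Finset.sum_add_distrib]
    refine Finset.sum_congr rfl fun c hc => ?_
    by_cases hI : In i c
    · by_cases h3 : Lo i c <;> by_cases h4 : Hi i c <;> simp [hI, h3, h4]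
    · have : Si i c = ∅ := by
        rw [Finset.eq_empty_iff_forall_notMem]
        intro v hv
        obtain ⟨hv, hvi⟩ := Finset.mem_filter.mp hv
        exact hI ⟨v, hv, hvi⟩
      simp [hI, this]
  have hgr : ∀ i, ∑ c ∈ C, (Si i c).card ≤ (P2 + 2 * P1 + P0) * B * min W (m - i * W)
      + (q2 * (L i).card + q1 * (St i).card + q1 * (En i).card + q0 * (Mi i).card) := by
    intro i
    set mi := min W (m - i * W) with hmi
    have hmiW : mi ≤ W := min_le_left _ _
    have hsubS : ∀ c, Si i c ⊆ S c := fun c => Finset.filter_subset _ _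
    have e2 := h2 mi hmiW B (a + i * W) (L i) (Si i)
      (fun c hc => hSisub i c (Finset.filter_subset _ _ hc))
      (hN.mono (Finset.filter_subset _ _) fun c _ => hsubS c)
    have lo : ∀ c ∈ C, ∀ v ∈ Si i c, a + i * W ≤ v := fun c hc v hv =>
      (Finset.mem_Ico.mp (hSisub i c hc hv)).1
    have hi : ∀ c ∈ C, ∀ v ∈ Si i c, v < a + (i+1) * W := fun c hc v hv => by
      have := (Finset.mem_Ico.mp (hSisub i c hc hv)).2
      rw [Nat.succ_mul]; omega
    have e3 := h1 mi hmiW B (a + i * W) (St i) (Si i)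
      (fun c hc => hSisub i c (Finset.filter_subset _ _ hc))
      (hN.append (a + (i+1) * W) (Finset.filter_subset _ _) (fun c _ => hsubS c)
        (fun c hc => hi c (Finset.filter_subset _ _ hc))
        (fun c hc => by
          obtain ⟨hcC, _, _, u, hu, hui⟩ := Finset.mem_filter.mp hc
          exact ⟨u, hu, hGge u (i+1) (hva c hcC u hu).1 hui⟩))
    have e4 := h1 mi hmiW B (a + i * W) (En i) (Si i)
      (fun c hc => hSisub i c (Finset.filter_subset _ _ hc))
      (hN.prepend (a + i * W) (Finset.filter_subset _ _) (fun c _ => hsubS c)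
        (fun c hc => lo c (Finset.filter_subset _ _ hc))
        (fun c hc => by
          obtain ⟨hcC, _, ⟨u, hu, hui⟩, _⟩ := Finset.mem_filter.mp hc
          exact ⟨u, hu, hGlt u i hui⟩))
    have n5 : NF (s+1) B (Mi i) (fun c => (S c).filter fun v => a + i * W ≤ v) :=
      hN.prepend (a + i * W) (Finset.filter_subset _ _) (fun c _ => Finset.filter_subset _ _)
        (fun c hc v hv => (Finset.mem_filter.mp hv).2)
        (fun c hc => by
          obtain ⟨hcC, _, ⟨u, hu, hui⟩, _⟩ := Finset.mem_filter.mp hc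
          exact ⟨u, hu, hGlt u i hui⟩)
    have e5 := h0 mi hmiW B (a + i * W) (Mi i) (Si i)
      (fun c hc => hSisub i c (Finset.filter_subset _ _ hc))
      (n5.append (a + (i+1) * W) (Finset.Subset.refl _)
        (fun c hc v hv => Finset.mem_filter.mpr
          ⟨hsubS c hv, lo c (Finset.filter_subset _ _ hc) v hv⟩)
        (fun c hc => hi c (Finset.filter_subset _ _ hc))
        (fun c hc => by
          obtain ⟨hcC, _, _, u, hu, hui⟩ := Finset.mem_filter.mp hc
          have h7 := hGge u (i+1) (hva c hcC u hu).1 hui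
          refine ⟨u, Finset.mem_filter.mpr ⟨hu, ?_⟩, h7⟩
          rw [Nat.succ_mul] at h7
          omega))
    rw [hsplit i]
    calc _ ≤ (P2 * B * mi + q2 * (L i).card) + (P1 * B * mi + q1 * (St i).card)
          + (P1 * B * mi + q1 * (En i).card) + (P0 * B * mi + q0 * (Mi i).card) := by
            gcongr
      _ = _ := by ring
  have cL : ∑ i ∈ Finset.range b, (L i).card ≤ (C \ Cg).card := by
    rw [← Finset.card_biUnion]
    · refine Finset.card_le_card fun c hc => ?_
      obtain ⟨i, _, hc⟩ := Finset.mem_biUnion.mp hc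
      obtain ⟨hcC, hI, hl, hh⟩ := Finset.mem_filter.mp hc
      refine Finset.mem_sdiff.mpr ⟨hcC, fun h => ?_⟩
      obtain ⟨_, u, hu, v, hv, hne⟩ := Finset.mem_filter.mp h
      have k1 : G u = i := by
        by_contra hx
        rcases Nat.lt_or_gt_of_ne hx with hx | hx
        · exact hl ⟨u, hu, hx⟩
        · exact hh ⟨u, hu, hx⟩
      have k2 : G v = i := by
        by_contra hx
        rcases Nat.lt_or_gt_of_ne hx with hx | hx
        · exact hl ⟨v, hv, hx⟩
        · exact hh ⟨v, hv, hx⟩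
      omega
    · intro i _ j _ hij
      refine Finset.disjoint_left.mpr fun c hc hc' => ?_
      obtain ⟨hcC, ⟨u, hu, hui⟩, hl, hh⟩ := Finset.mem_filter.mp hc
      obtain ⟨hcC', ⟨u', hu', hui'⟩, hl', hh'⟩ := Finset.mem_filter.mp hc'
      rcases Nat.lt_or_gt_of_ne hij with hx | hx
      · exact hh ⟨u', hu', by omega⟩
      · exact hh' ⟨u, hu, by omega⟩
  have cSt : ∑ i ∈ Finset.range b, (St i).card ≤ Cg.card := by
    rw [← Finset.card_biUnion]
    · refine Finset.card_le_card fun c hc => ?_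
      obtain ⟨i, _, hc⟩ := Finset.mem_biUnion.mp hc
      obtain ⟨hcC, ⟨u, hu, hui⟩, hl, ⟨v, hv, hvi⟩⟩ := Finset.mem_filter.mp hc
      exact Finset.mem_filter.mpr ⟨hcC, u, hu, v, hv, by omega⟩
    · intro i _ j _ hij
      refine Finset.disjoint_left.mpr fun c hc hc' => ?_
      obtain ⟨hcC, ⟨u, hu, hui⟩, hl, hh⟩ := Finset.mem_filter.mp hc
      obtain ⟨hcC', ⟨u', hu', hui'⟩, hl', hh'⟩ := Finset.mem_filter.mp hc'
      rcases Nat.lt_or_gt_of_ne hij with hx | hx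
      · exact hl' ⟨u, hu, by omega⟩
      · exact hl ⟨u', hu', by omega⟩
  have cEn : ∑ i ∈ Finset.range b, (En i).card ≤ Cg.card := by
    rw [← Finset.card_biUnion]
    · refine Finset.card_le_card fun c hc => ?_
      obtain ⟨i, _, hc⟩ := Finset.mem_biUnion.mp hc
      obtain ⟨hcC, ⟨u, hu, hui⟩, ⟨v, hv, hvi⟩, hh⟩ := Finset.mem_filter.mp hc
      exact Finset.mem_filter.mpr ⟨hcC, u, hu, v, hv, by omega⟩
    · intro i _ j _ hij
      refine Finset.disjoint_left.mpr fun c hc hc' => ?_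
      obtain ⟨hcC, ⟨u, hu, hui⟩, hl, hh⟩ := Finset.mem_filter.mp hc
      obtain ⟨hcC', ⟨u', hu', hui'⟩, hl', hh'⟩ := Finset.mem_filter.mp hc'
      rcases Nat.lt_or_gt_of_ne hij with hx | hx
      · exact hh ⟨u', hu', by omega⟩
      · exact hh' ⟨u, hu, by omega⟩
  have cMi : ∑ i ∈ Finset.range b, (Mi i).card ≤ ∑ c ∈ Cg, (T c).card := by
    calc ∑ i ∈ Finset.range b, (Mi i).card
        ≤ ∑ i ∈ Finset.range b, (Cg.filter fun c => i ∈ T c).card := by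
          refine Finset.sum_le_sum fun i _ => Finset.card_le_card fun c hc => ?_
          obtain ⟨hcC, ⟨u, hu, hui⟩, ⟨v, hv, hvi⟩, hh⟩ := Finset.mem_filter.mp hc
          refine Finset.mem_filter.mpr ⟨Finset.mem_filter.mpr ⟨hcC, u, hu, v, hv, by omega⟩, ?_⟩
          exact Finset.mem_image.mpr ⟨u, hu, hui⟩
      _ = ∑ c ∈ Cg, ((Finset.range b).filter fun i => i ∈ T c).card := by
          simp only [Finset.card_filter]
          rw [Finset.sum_comm]
      _ ≤ _ := by
          refine Finset.sum_le_sum fun c _ => Finset.card_le_card fun i hi => ?_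
          exact (Finset.mem_filter.mp hi).2
  have eT := hc B 0 Cg T (fun c hc => by
      have := hTb c (Finset.filter_subset _ _ hc)
      rwa [Finset.range_eq_Ico, ← Nat.zero_add b] at this) (by
      intro x hx D hD hf
      refine hN (fun i => a + x i * W) ?_ D (hD.trans (Finset.filter_subset _ _)) ?_
      · intro i j hij
        have := hx hij
        dsimp only
        gcongr
      · intro c hc i hi
        obtain ⟨v, hv, h3, h4⟩ := hf c hc i hi
        obtain ⟨u, hu, rfl⟩ := Finset.mem_image.mp hv
        exact ⟨u, hu, hGge u _ (hva c (Finset.filter_subset _ _ (hD hc)) u hu).1 h3, hGlt u _ h4⟩)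
  have hCc : (C \ Cg).card + Cg.card = C.card := by
    rw [Finset.card_sdiff_add_card_eq_card (Finset.filter_subset _ _)]
  rw [hsum]
  calc _ ≤ ∑ i ∈ Finset.range b, ((P2 + 2 * P1 + P0) * B * min W (m - i * W)
      + (q2 * (L i).card + q1 * (St i).card + q1 * (En i).card + q0 * (Mi i).card)) :=
        Finset.sum_le_sum fun i _ => hgr i
    _ = (P2 + 2 * P1 + P0) * B * min (b * W) m + (q2 * ∑ i ∈ Finset.range b, (L i).card
        + q1 * ∑ i ∈ Finset.range b, (St i).card + q1 * ∑ i ∈ Finset.range b, (En i).card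
        + q0 * ∑ i ∈ Finset.range b, (Mi i).card) := by
        rw [← sum_groups]
        simp only [Finset.sum_add_distrib, Finset.mul_sum]
    _ ≤ (P2 + 2 * P1 + P0) * B * m + (q2 * (C \ Cg).card + q1 * Cg.card + q1 * Cg.card
        + q0 * (Pc * B * b + qc * Cg.card)) := by
        gcongr
        · exact min_le_right _ _
        · exact cMi.trans eT
    _ = (P2 + 2 * P1 + P0) * B * m + q0 * Pc * B * b
        + (q2 * (C \ Cg).card + (2 * q1 + q0 * qc) * Cg.card) := by ring
    _ ≤ (P2 + 2 * P1 + P0) * B * m + q0 * Pc * B * b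
        + (q2 * (C \ Cg).card + q2 * Cg.card) := by gcongr
    _ = _ := by rw [← hCc]; ring

/-- Ackermann-type hierarchy, inverse to `alphaHier` -/
def Ak : ℕ → ℕ → ℕ
  | 0, j => 2 ^ j
  | _ + 1, 0 => 1
  | d + 1, j + 1 => Ak d (Ak (d + 1) j)

/-- coefficients of the number of columns -/
def Qf : ℕ → ℕ → ℕ
  | 0, _ => 0
  | 1, _ => 0
  | 2, _ => 1
  | s + 3, 0 => 2 * Qf (s + 2) 0 + Qf (s + 1) 0 * 2
  | s + 3, d + 1 => 2 * Qf (s + 2) (d + 1) + Qf (s + 1) (d + 1) * Qf (s + 3) d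
  termination_by s d => (s, d)

/-- base coefficients of the number of rows -/
def Pb : ℕ → ℕ
  | 0 => 1
  | 1 => 1
  | s + 2 => 2 * Pb (s + 1) + Pb s

/-- coefficients of the number of rows -/
def Pf (e : ℕ) : ℕ → ℕ → ℕ
  | s, 0 => e ^ s * Pb s
  | 0, _ + 1 => 1
  | 1, _ + 1 => 1
  | s + 2, d + 1 => 2 * Pf e (s + 1) (d + 1) + Pf e s (d + 1)
      + 2 * 2 ^ (s + 2) * Qf s (d + 1) * Pf e (s + 2) d
  termination_by s d => (s, d)

theorem Qf_pos (s d : ℕ) : 1 ≤ Qf (s + 2) d := by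
  induction s with
  | zero => simp [Qf]
  | succ s ih => cases d <;> rw [Qf] <;> omega

theorem Qf_ineq0 (s : ℕ) : 2 * Qf (s + 1) 0 + Qf s 0 * 2 ≤ Qf (s + 2) 0 := by
  cases s with
  | zero => simp [Qf]
  | succ s => rw [Qf.eq_4]

theorem Qf_ineq (s d : ℕ) : 2 * Qf (s + 1) (d + 1) + Qf s (d + 1) * Qf (s + 2) d
    ≤ Qf (s + 2) (d + 1) := by
  cases s with
  | zero => simp [Qf]
  | succ s => rw [Qf.eq_5]

theorem Ak_pos (d j : ℕ) : 1 ≤ Ak d j := by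
  induction d generalizing j with
  | zero => rw [Ak]; exact Nat.one_le_two_pow
  | succ d ih => cases j with
    | zero => simp [Ak]
    | succ j => rw [Ak]; exact ih _

theorem pow_gap (a b c s J : ℕ) :
    (2 * a + b + c) * (J+1) ^ (s + 2) + 2 * (a * (J+1) ^ (s + 1)) + b * (J+1) ^ s + c
      ≤ (2 * a + b + c) * (J + 2) ^ (s + 2) := by
  have h1 : (J+1) ^ (s+2) + (J+1) ^ (s+1) ≤ (J+2) ^ (s+2) := by
    have : (J+1) ^ (s+1) ≤ (J+2) ^ (s+1) := Nat.pow_le_pow_left (by omega) _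
    calc (J+1) ^ (s+2) + (J+1) ^ (s+1) = (J+2) * (J+1) ^ (s+1) := by ring
      _ ≤ (J+2) * (J+2) ^ (s+1) := by gcongr
      _ = _ := by ring
  have h2 : (J+1) ^ s ≤ (J+1) ^ (s+1) := Nat.pow_le_pow_right (by omega) (by omega)
  have h3 : 1 ≤ (J+1) ^ (s+1) := Nat.one_le_pow _ _ (by omega)
  calc _ ≤ (2 * a + b + c) * (J+1) ^ (s + 2) + 2 * (a * (J+1) ^ (s + 1)) + b * (J+1) ^ (s+1)
        + c * (J+1) ^ (s+1) := by
        gcongr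
        nlinarith
    _ = (2 * a + b + c) * ((J+1) ^ (s+2) + (J+1) ^ (s+1)) := by ring
    _ ≤ _ := by gcongr

theorem Bd_base (γ : Type) : ∀ s J m, m ≤ 2 ^ J → Bd γ s m (Pb s * (J + 1) ^ s) (Qf s 0)
  | 0, J, m, _ => (Bd_zero γ m).mono (by simp [Pb]) (by simp)
  | 1, J, m, _ => (Bd_one γ m).mono (by simp [Pb]) (by simp)
  | s + 2, 0, m, h => (Bd_triv γ (s+2) m _).mono le_rfl (by
      have := Qf_pos s 0
      simp at h; omega)
  | s + 2, J + 1, m, h => by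
      intro B a C S hS hN
      have := Bd_step (W := 2 ^ J) (b := 2) (by positivity) (by rw [pow_succ] at h; omega)
        (fun m' hm' => Bd_base γ (s+2) J m' hm') (fun m' hm' => Bd_base γ (s+1) J m' hm')
        (fun m' hm' => Bd_base γ s J m' hm') (Bd_triv γ (s+2) 2 0) (Qf_ineq0 s) B a C S hS hN
      refine this.trans ?_
      have h4 := pow_gap (Pb (s+1)) (Pb s) 0 s J
      have h5 : Pb (s + 2) = 2 * Pb (s + 1) + Pb s := rfl
      rw [← add_zero (2 * Pb (s + 1) + Pb s)] at h5
      rw [← h5] at h4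
      rw [mul_zero, zero_mul, zero_mul, add_zero]
      gcongr
      show _ ≤ Pb (s+2) * (J + 2) ^ (s+2)
      omega

theorem Bd_main (γ : Type) (e : ℕ) (he : 1 ≤ e) : ∀ d s j m, s ≤ e → m ≤ (Ak d j) ^ e →
    Bd γ s m (Pf e s d * (j + 1) ^ s) (Qf s d)
  | 0, s, j, m, _, h => by
      rw [Ak, ← pow_mul] at h
      refine (Bd_base γ s (j * e) m h).mono ?_ le_rfl
      rw [Pf]
      calc Pb s * (j * e + 1) ^ s ≤ Pb s * (e * (j + 1)) ^ s := by
            gcongr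
            nlinarith
        _ = _ := by rw [mul_pow]; ring
  | d + 1, 0, j, m, _, _ => (Bd_zero γ m).mono (by simp [Pf]) (by simp)
  | d + 1, 1, j, m, _, _ => (Bd_one γ m).mono (by simp [Pf]) (by simp)
  | d + 1, s + 2, 0, m, _, h => (Bd_triv γ (s+2) m _).mono le_rfl (by
      have := Qf_pos s (d+1)
      simp [Ak] at h; omega)
  | d + 1, s + 2, j + 1, m, hs, h => by
      intro B a C S hS hN
      rw [Ak] at h
      set w := Ak (d+1) j with hw
      have hw1 : 1 ≤ w := Ak_pos _ _
      have hWpos : 1 ≤ w ^ e := Nat.one_le_pow _ _ hw1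
      rcases Nat.lt_or_ge m (w ^ e) with hm | hm
      · have := Bd_main γ e he (d+1) (s+2) j m hs hm.le B a C S hS hN
        refine this.trans ?_
        gcongr
        omega
      set b := (m + w ^ e - 1) / w ^ e with hb
      have hb1 : m ≤ b * w ^ e := by
        have h6 := Nat.div_add_mod (m + w ^ e - 1) (w ^ e)
        have h7 := Nat.mod_lt (m + w ^ e - 1) hWpos
        rw [← hb] at h6
        nlinarith [Nat.sub_add_cancel (show 1 ≤ m + w ^ e by omega)]
      have hb2 : b * w ^ e ≤ 2 * m := by
        have := Nat.div_mul_le_self (m + w ^ e - 1) (w ^ e)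
        rw [← hb] at this
        omega
      have hb3 : b ≤ m := by
        apply Nat.le_of_lt_succ
        apply (Nat.div_lt_iff_lt_mul hWpos).mpr
        nlinarith [Nat.sub_add_cancel (show 1 ≤ m + w ^ e by omega)]
      have := Bd_step (W := w ^ e) (b := b) hWpos hb1
        (fun m' hm' => Bd_main γ e he (d+1) (s+2) j m' hs hm')
        (fun m' hm' => Bd_main γ e he (d+1) (s+1) j m' (by omega) hm')
        (fun m' hm' => Bd_main γ e he (d+1) s j m' (by omega) hm')
        (Bd_main γ e he d (s+2) w b hs (hb3.trans h)) (Qf_ineq s d) B a C S hS hN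
      refine this.trans ?_
      have h4 := pow_gap (Pf e (s+1) (d+1)) (Pf e s (d+1))
        (2 * 2 ^ (s + 2) * Qf s (d + 1) * Pf e (s + 2) d) s j
      have h5 : Pf e (s + 2) (d+1) = 2 * Pf e (s + 1) (d + 1) + Pf e s (d + 1)
        + 2 * 2 ^ (s + 2) * Qf s (d + 1) * Pf e (s + 2) d := by rw [Pf]
      rw [← h5] at h4
      have h6 : (w + 1) ^ (s+2) * b ≤ 2 * 2 ^ (s+2) * m := by
        calc (w + 1) ^ (s+2) * b ≤ (2 * w) ^ (s+2) * b := by gcongr; omega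
          _ = 2 ^ (s+2) * (w ^ (s+2) * b) := by rw [mul_pow]; ring
          _ ≤ 2 ^ (s+2) * (w ^ e * b) := by gcongr
          _ ≤ 2 ^ (s+2) * (2 * m) := Nat.mul_le_mul_left _ (by linarith)
          _ = _ := by ring
      have h7 : Qf s (d+1) * (Pf e (s+2) d * (w+1)^(s+2)) * B * b
          ≤ (2 * 2 ^ (s + 2) * Qf s (d + 1) * Pf e (s + 2) d) * B * m := by
        calc _ = Qf s (d+1) * Pf e (s+2) d * B * ((w+1)^(s+2) * b) := by ring
          _ ≤ Qf s (d+1) * Pf e (s+2) d * B * (2 * 2 ^ (s+2) * m) := by gcongr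
          _ = _ := by ring
      have h8 := Nat.mul_le_mul_right (B * m) h4
      show _ ≤ Pf e (s+2) (d+1) * (j + 2) ^ (s+2) * B * m + _
      nlinarith
  termination_by d s j => (d, s, j)

section OneInclusion

variable {ι : Type} [Fintype ι] [DecidableEq ι] {r : ℕ}

/-- `Y` takes all possible values on the coordinates in `J` -/
def Shat (Y : Finset (ι → Fin (r+1))) (J : Finset ι) : Prop :=
  ∀ z : ι → Fin (r+1), ∃ y ∈ Y, ∀ j ∈ J, y j = z j

open Classical in
/-- full lines of `Y` in direction `j`, represented by their `0`-point -/
noncomputable def lns (Y : Finset (ι → Fin (r+1))) (j : ι) : Finset (ι → Fin (r+1)) :=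
  Finset.univ.filter fun y => y j = 0 ∧ ∀ a, Function.update y j a ∈ Y

/-- number of points of `Y` on the line through `y` in direction `j` -/
def mult (Y : Finset (ι → Fin (r+1))) (j : ι) (y : ι → Fin (r+1)) : ℕ :=
  (Finset.univ.filter fun a => Function.update y j a ∈ Y).card

/-- level sets -/
def lev (Y : Finset (ι → Fin (r+1))) (j : ι) (b : ℕ) : Finset (ι → Fin (r+1)) :=
  Finset.univ.filter fun y => y j = 0 ∧ b < mult Y j y

theorem mult_le (Y : Finset (ι → Fin (r+1))) (j : ι) (y : ι → Fin (r+1)) : mult Y j y ≤ r + 1 := by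
  unfold mult
  exact (Finset.card_le_univ _).trans (by simp)

/-- fibering over the `j` coordinate -/
theorem card_fiber (Z : Finset (ι → Fin (r+1))) (j : ι) :
    Z.card = ∑ y ∈ Finset.univ.filter (fun y : ι → Fin (r+1) => y j = 0), mult Z j y := by
  classical
  rw [Finset.card_eq_sum_card_fiberwise (f := fun y => Function.update y j 0)
    (t := Finset.univ.filter (fun y : ι → Fin (r+1) => y j = 0))]
  · refine Finset.sum_congr rfl fun y hy => ?_
    have hy0 := (Finset.mem_filter.mp hy).2
    unfold mult
    symm
    refine Finset.card_bij (fun a _ => Function.update y j a) ?_ ?_ ?_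
    · intro a ha
      refine Finset.mem_filter.mpr ⟨(Finset.mem_filter.mp ha).2, ?_⟩
      rw [Function.update_idem, ← hy0, Function.update_eq_self]
    · intro a _ b _ h
      simpa using congrFun h j
    · intro z hz
      obtain ⟨h1, h2⟩ := Finset.mem_filter.mp hz
      have : Function.update y j (z j) = z := by
        rw [← h2, Function.update_idem, Function.update_eq_self]
      exact ⟨z j, Finset.mem_filter.mpr ⟨Finset.mem_univ _, by rwa [this]⟩, this⟩
  · intro y _
    simp

theorem card_lev (Y : Finset (ι → Fin (r+1))) (j : ι) :
    Y.card = ∑ b ∈ Finset.range (r+1), (lev Y j b).card := by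
  rw [card_fiber Y j]
  unfold lev
  simp only [Finset.card_filter]
  rw [Finset.sum_comm, Finset.sum_filter]
  refine Finset.sum_congr rfl fun y _ => ?_
  by_cases h : y j = 0
  · simp only [h, true_and, if_true]
    rw [← Finset.card_filter]
    have : (Finset.range (r+1)).filter (fun b => b < mult Y j y) = Finset.range (mult Y j y) := by
      ext b
      have := mult_le Y j y
      simp only [Finset.mem_filter, Finset.mem_range]
      omega
    rw [this, Finset.card_range]
  · simp [h]

theorem lns_lev (Y : Finset (ι → Fin (r+1))) (j i : ι) (hij : i ≠ j) :
    (lns Y i).card ≤ ∑ b ∈ Finset.range (r+1), (lns (lev Y j b) i).card := by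
  classical
  rw [card_fiber (lns Y i) j]
  have hx : ∀ b, lns (lev Y j b) i ⊆ Finset.univ.filter (fun y : ι → Fin (r+1) => y j = 0) := by
    intro b y hy
    have h1 := (Finset.mem_filter.mp hy).2.2 0
    have h2 := (Finset.mem_filter.mp h1).2.1
    rw [Function.update_of_ne hij.symm] at h2
    simp [h2]
  have e : ∀ b, (lns (lev Y j b) i).card
      = ∑ y ∈ Finset.univ.filter (fun y : ι → Fin (r+1) => y j = 0),
        if y ∈ lns (lev Y j b) i then 1 else 0 := by
    intro b
    rw [← Finset.card_filter, Finset.filter_mem_eq_inter, Finset.inter_eq_right.mpr (hx b)]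
  simp only [e]
  rw [Finset.sum_comm]
  refine Finset.sum_le_sum fun y hy => ?_
  have hy0 := (Finset.mem_filter.mp hy).2
  rw [← Finset.card_filter]
  calc mult (lns Y i) j y = (Finset.range (mult (lns Y i) j y)).card := by simp
    _ ≤ _ := by
      refine Finset.card_le_card fun b hb => ?_
      have hb := Finset.mem_range.mp hb
      refine Finset.mem_filter.mpr ⟨Finset.mem_range.mpr (hb.trans_le (mult_le _ _ _)), ?_⟩
      have hne : 0 < mult (lns Y i) j y := by omega
      obtain ⟨a, ha⟩ := Finset.card_pos.mp hne
      have ha := (Finset.mem_filter.mp (Finset.mem_filter.mp ha).2).2.1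
      rw [Function.update_of_ne hij] at ha
      refine Finset.mem_filter.mpr ⟨Finset.mem_univ _, ha, fun c => ?_⟩
      refine Finset.mem_filter.mpr ⟨Finset.mem_univ _, ?_, hb.trans_le ?_⟩
      · rw [Function.update_of_ne hij.symm]; exact hy0
      · refine Finset.card_le_card fun a' ha' => ?_
        refine Finset.mem_filter.mpr ⟨Finset.mem_univ _, ?_⟩
        have := (Finset.mem_filter.mp (Finset.mem_filter.mp ha').2).2.2 c
        rwa [Function.update_comm hij.symm] at this

theorem shat_lev {Y : Finset (ι → Fin (r+1))} {j : ι} {b : ℕ} {J : Finset ι} (hj : j ∉ J)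
    (h : Shat (lev Y j b) J) : Shat Y J := by
  intro z
  obtain ⟨y, hy, hyz⟩ := h z
  have := (Finset.mem_filter.mp hy).2.2
  obtain ⟨a, ha⟩ := Finset.card_pos.mp (show 0 < mult Y j y by omega)
  refine ⟨_, (Finset.mem_filter.mp ha).2, fun i hi => ?_⟩
  rw [Function.update_of_ne (by rintro rfl; exact hj hi)]
  exact hyz i hi

theorem mult_full {Y : Finset (ι → Fin (r+1))} {j : ι} {y : ι → Fin (r+1)} (h : r < mult Y j y)
    (a : Fin (r+1)) : Function.update y j a ∈ Y := by
  have : (Finset.univ.filter fun a => Function.update y j a ∈ Y) = Finset.univ := by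
    apply Finset.eq_univ_of_card
    have := mult_le Y j y
    rw [Fintype.card_fin]
    unfold mult at *
    omega
  have h2 := Finset.mem_univ a
  rw [← this] at h2
  exact (Finset.mem_filter.mp h2).2

theorem shat_top {Y : Finset (ι → Fin (r+1))} {j : ι} {J : Finset ι} (hj : j ∉ J)
    (h : Shat (lev Y j r) J) : Shat Y (insert j J) := by
  intro z
  obtain ⟨y, hy, hyz⟩ := h z
  refine ⟨_, mult_full (Finset.mem_filter.mp hy).2.2 (z j), fun i hi => ?_⟩
  rcases Finset.mem_insert.mp hi with rfl | hi1
  · simp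
  · rw [Function.update_of_ne (by rintro rfl; exact hj hi1)]
    exact hyz i hi1

theorem one_incl (A : Finset ι) : ∀ (k : ℕ) (Y : Finset (ι → Fin (r+1))),
    (∀ J ⊆ A, Shat Y J → J.card ≤ k) → ∑ j ∈ A, (lns Y j).card ≤ k * Y.card := by
  classical
  induction A using Finset.induction_on with
  | empty => simp
  | insert j A hj ih =>
    intro k Y hY
    rw [Finset.sum_insert hj]
    have h1 : ∑ i ∈ A, (lns Y i).card
        ≤ ∑ b ∈ Finset.range (r+1), ∑ i ∈ A, (lns (lev Y j b) i).card := by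
      rw [Finset.sum_comm]
      exact Finset.sum_le_sum fun i hi => lns_lev Y j i (by rintro rfl; exact hj hi)
    have h2 : (lns Y j).card ≤ (lev Y j r).card := by
      refine Finset.card_le_card fun y hy => ?_
      obtain ⟨_, h3, h4⟩ := Finset.mem_filter.mp hy
      refine Finset.mem_filter.mpr ⟨Finset.mem_univ _, h3, ?_⟩
      unfold mult
      simp [h4]
    have h5 : ∀ b, ∑ i ∈ A, (lns (lev Y j b) i).card ≤ k * (lev Y j b).card := fun b =>
      ih k _ fun J hJ hs => hY J (hJ.trans (Finset.subset_insert _ _))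
        (shat_lev (fun h => hj (hJ h)) hs)
    have h6 : ∑ i ∈ A, (lns (lev Y j r) i).card + (lev Y j r).card ≤ k * (lev Y j r).card := by
      have h7 : ∀ J ⊆ A, Shat (lev Y j r) J → J.card + 1 ≤ k := fun J hJ hs => by
        have := hY _ (Finset.insert_subset_insert j hJ) (shat_top (fun h => hj (hJ h)) hs)
        rwa [Finset.card_insert_of_notMem (fun h => hj (hJ h))] at this
      rcases Finset.eq_empty_or_nonempty (lev Y j r) with h0 | ⟨y0, h0⟩
      · have := h5 r
        rw [h0] at this ⊢
        simpa using this
      · have hk := h7 ∅ (Finset.empty_subset _) fun z => ⟨y0, h0, by simp⟩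
        obtain ⟨k, rfl⟩ : ∃ k', k = k' + 1 := ⟨k - 1, by simp at hk; omega⟩
        have := ih k (lev Y j r) fun J hJ hs => by have := h7 J hJ hs; omega
        rw [Nat.succ_mul]
        omega
    rw [card_lev Y j, Finset.sum_range_succ, mul_add, Finset.mul_sum]
    rw [Finset.sum_range_succ] at h1
    have := Finset.sum_le_sum (s := Finset.range r) fun b _ => h5 b
    omega

/-- charging scheme for full lines -/
theorem charge (A : Finset ι) (k : ℕ) (Y : Finset (ι → Fin (r+1)))
    (hY : ∀ J ⊆ A, Shat Y J → J.card ≤ k) :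
    ∃ τ : {p : ι × (ι → Fin (r+1)) // p.1 ∈ A ∧ p.2 ∈ lns Y p.1} → (ι → Fin (r+1)) × Fin k,
      Function.Injective τ ∧ ∀ p, ∃ a, (τ p).1 = Function.update p.1.2 p.1.1 a := by
  classical
  set t : {p : ι × (ι → Fin (r+1)) // p.1 ∈ A ∧ p.2 ∈ lns Y p.1} →
    Finset ((ι → Fin (r+1)) × Fin k) := fun p =>
      (Finset.univ.image fun a => Function.update p.1.2 p.1.1 a) ×ˢ Finset.univ with ht
  have hall := (Finset.all_card_le_biUnion_card_iff_exists_injective t).mp (by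
    intro S
    set Y' := S.biUnion fun p => (Finset.univ.image fun a => Function.update p.1.2 p.1.1 a) with hY'
    have e1 : S.biUnion t = Y' ×ˢ (Finset.univ : Finset (Fin k)) := by
      ext ⟨y, κ⟩
      simp [ht, hY']
    have hsub : Y' ⊆ Y := by
      intro y hy
      obtain ⟨p, hp, hy⟩ := Finset.mem_biUnion.mp hy
      obtain ⟨a, _, rfl⟩ := Finset.mem_image.mp hy
      exact (Finset.mem_filter.mp p.2.2).2.2 a
    have e2 := one_incl A k Y' (fun J hJ hs => hY J hJ fun z => by
      obtain ⟨y, hy, h⟩ := hs z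
      exact ⟨y, hsub hy, h⟩)
    rw [e1, Finset.card_product, Finset.card_univ, Fintype.card_fin, mul_comm]
    refine le_trans ?_ e2
    rw [← Finset.card_sigma]
    refine Finset.card_le_card_of_injOn (fun p => ⟨p.1.1, p.1.2⟩) ?_ ?_
    · intro p hp
      refine Finset.mem_sigma.mpr ⟨p.2.1, Finset.mem_filter.mpr ⟨Finset.mem_univ _,
        (Finset.mem_filter.mp p.2.2).2.1, fun a => ?_⟩⟩
      exact Finset.mem_biUnion.mpr ⟨p, hp, Finset.mem_image_of_mem _ (Finset.mem_univ _)⟩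
    · rintro ⟨⟨j, y⟩, h⟩ _ ⟨⟨j', y'⟩, h'⟩ _ he
      simp only [Sigma.mk.injEq, heq_eq_eq] at he
      obtain ⟨rfl, rfl⟩ := he
      rfl)
  obtain ⟨τ, hτ, h⟩ := hall
  refine ⟨τ, hτ, fun p => ?_⟩
  have := (Finset.mem_product.mp (h p)).1
  obtain ⟨a, _, ha⟩ := Finset.mem_image.mp this
  exact ⟨a, ha.symm⟩

/-- the number of full lines in a family of functions with values in `ℕ` -/
theorem lines_bound (A : Finset ι) (k : ℕ) (F : Finset (ι → ℕ)) (g : ℕ → Fin (r+1))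
    (hF : ∀ J ⊆ A, (∀ z : ι → Fin (r+1), ∃ f ∈ F, ∀ j ∈ J, g (f j) = z j) → J.card ≤ k)
    (D : Finset (ι × (ι → ℕ))) (hD : ∀ p ∈ D, p.1 ∈ A ∧ p.2 p.1 = 0 ∧
      ∀ a, ∃ v, g v = a ∧ Function.update p.2 p.1 v ∈ F) : D.card ≤ k * F.card := by
  classical
  set Y : Finset (ι → Fin (r+1)) := F.image fun f => g ∘ f with hYdef
  obtain ⟨τ, hτ, hτ2⟩ := charge A k Y (fun J hJ hs => hF J hJ fun z => by
    obtain ⟨y, hy, h⟩ := hs z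
    obtain ⟨f, hf, rfl⟩ := Finset.mem_image.mp hy
    exact ⟨f, hf, h⟩)
  have hl : ∀ p : D, p.1.1 ∈ A ∧ Function.update (g ∘ p.1.2) p.1.1 0 ∈ lns Y p.1.1 := by
    rintro ⟨p, hp⟩
    obtain ⟨h1, h2, h3⟩ := hD p hp
    refine ⟨h1, Finset.mem_filter.mpr ⟨Finset.mem_univ _, by simp, fun a => ?_⟩⟩
    obtain ⟨v, hv, hvF⟩ := h3 a
    refine Finset.mem_image.mpr ⟨_, hvF, ?_⟩
    rw [Function.update_idem, Function.comp_update, hv]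
  set ℓ : D → {p : ι × (ι → Fin (r+1)) // p.1 ∈ A ∧ p.2 ∈ lns Y p.1} :=
    fun p => ⟨(p.1.1, Function.update (g ∘ p.1.2) p.1.1 0), hl p⟩ with hℓ
  have hex : ∀ p : D, ∃ f : ι → ℕ, f ∈ F ∧ g ∘ f = (τ (ℓ p)).1 ∧
      Function.update f p.1.1 0 = p.1.2 := by
    intro p
    obtain ⟨a, ha⟩ := hτ2 (ℓ p)
    obtain ⟨h1, h2, h3⟩ := hD p.1 p.2
    obtain ⟨v, hv, hvF⟩ := h3 a
    refine ⟨_, hvF, ?_, ?_⟩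
    · rw [ha, Function.comp_update, hv]
      simp [hℓ]
    · rw [Function.update_idem, ← h2, Function.update_eq_self]
  choose φ hφ1 hφ2 hφ3 using hex
  have : Fintype.card D ≤ Fintype.card (F × Fin k) := by
    refine Fintype.card_le_of_injective
      (fun p => (⟨φ p, hφ1 p⟩, (τ (ℓ p)).2)) ?_
    intro p p' h
    simp only [Prod.mk.injEq, Subtype.mk.injEq] at h
    obtain ⟨h1, h2⟩ := h
    have e : ℓ p = ℓ p' := by
      apply hτ
      refine Prod.ext ?_ h2
      rw [← hφ2, ← hφ2, h1]
    have e1 : p.1.1 = p'.1.1 := congrArg (fun x => x.1.1) e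
    have e2 : p.1.2 = p'.1.2 := by rw [← hφ3, ← hφ3, h1, e1]
    exact Subtype.ext (Prod.ext e1 e2)
  simpa [mul_comm] using this

end OneInclusion

theorem iterCount_le_pred (f : ℕ → ℕ) (hf : ∀ m, 2 ≤ m → f m < m) :
    ∀ fuel m, iterCount f fuel m ≤ m - 1 := by
  intro fuel
  induction fuel with
  | zero => intro m; simp [iterCount]
  | succ fuel ih =>
    intro m
    rw [iterCount]
    split_ifs with h
    · omega
    · have := ih (f m)
      have := hf m (by omega)
      omega

theorem iterCount_galois (f g G : ℕ → ℕ) (hf : ∀ m, 2 ≤ m → f m < m)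
    (hfg : ∀ m x, f m ≤ x → m ≤ g x) (hG1 : ∀ j, 1 ≤ G j) (hG : ∀ j, G (j+1) = g (G j)) :
    ∀ fuel m j, m ≤ fuel → iterCount f fuel m ≤ j → m ≤ G j := by
  intro fuel
  induction fuel with
  | zero => intro m j h _; omega
  | succ fuel ih =>
    intro m j hm h
    rw [iterCount] at h
    split_ifs at h with h1
    · exact h1.trans (hG1 j)
    · obtain ⟨j, rfl⟩ : ∃ j', j = j' + 1 := ⟨j - 1, by omega⟩
      rw [hG]
      apply hfg
      have := hf m (by omega)
      exact ih _ _ (by omega) (by omega)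

theorem alphaHier_lt (d : ℕ) : ∀ m, 2 ≤ m → alphaHier (d+1) m < m := by
  cases d with
  | zero => intro m hm; simp only [alphaHier]; omega
  | succ d =>
    induction d with
    | zero =>
      intro m hm
      rw [alphaHier]
      have := iterCount_le_pred (alphaHier 1) (fun m hm => by simp only [alphaHier]; omega) m m
      simp only [zero_add] at *
      omega
    | succ d ih =>
      intro m hm
      rw [alphaHier]
      have := iterCount_le_pred _ ih m m
      omega

theorem alphaHier_galois (d : ℕ) : ∀ m j, alphaHier (d+2) m ≤ j → m ≤ Ak d j := by
  induction d with
  | zero =>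
    intro m j h
    rw [alphaHier] at h
    refine iterCount_galois (alphaHier 1) (fun x => 2 * x) (fun j => Ak 0 j) (alphaHier_lt 0)
      ?_ (Ak_pos 0) ?_ m m j le_rfl h
    · intro m x h; simp only [alphaHier] at h; omega
    · intro j; simp only [Ak]; ring
  | succ d ih =>
    intro m j h
    rw [alphaHier] at h
    exact iterCount_galois (alphaHier (d+2)) (Ak d) (Ak (d+1)) (alphaHier_lt (d+1))
      ih (Ak_pos _) (fun j => by rw [Ak]) m m j le_rfl h

theorem iterCount_two (f : ℕ → ℕ) (hf : ∀ m, 2 ≤ m → f m < m) (m : ℕ) (hm : 2 ≤ m) 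
    (h4 : 4 ≤ f m) (hf4 : f (f m) + 2 ≤ f m) : iterCount f m m < f m := by
  obtain ⟨u, rfl⟩ : ∃ u, m = u + 2 := ⟨m - 2, by omega⟩
  rw [iterCount, if_neg (by omega), iterCount, if_neg (by omega)]
  have := iterCount_le_pred f hf u (f (f (u+2)))
  omega

theorem alphaHier_four (d : ℕ) : ∀ m, 4 ≤ m → alphaHier (d+1) m + 2 ≤ m := by
  induction d with
  | zero => intro m hm; simp only [alphaHier]; omega
  | succ d ih =>
    intro m hm
    have h1 := ih m hm
    obtain ⟨u, rfl⟩ : ∃ u, m = u + 1 := ⟨m - 1, by omega⟩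
    rw [alphaHier, iterCount, if_neg (by omega)]
    have := iterCount_le_pred (alphaHier (d+1)) (alphaHier_lt d) u (alphaHier (d+1) (u+1))
    omega

theorem exists_alphaHier (n : ℕ) : ∃ k, 1 ≤ k ∧ alphaHier k n ≤ 3 := by
  by_contra hc
  push Not at hc
  have hn : 4 ≤ n := by
    have := hc 1 le_rfl
    simp only [alphaHier] at this
    omega
  have : ∀ j, alphaHier (j+1) n + j ≤ n := by
    intro j
    induction j with
    | zero => simp only [alphaHier]; omega
    | succ j ih =>
      have h1 := hc (j+1) (by omega)
      have h2 := iterCount_two (alphaHier (j+1)) (alphaHier_lt j) n (by omega) h1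
        (alphaHier_four j _ h1)
      rw [alphaHier]
      omega
  have h1 := this n
  have h2 := hc (n+1) (by omega)
  omega

theorem invAck_spec (n : ℕ) : 1 ≤ invAck n ∧ alphaHier (invAck n) n ≤ 3 :=
  Nat.sInf_mem (exists_alphaHier n)

theorem le_Ak (n : ℕ) : n ≤ Ak (invAck n - 2) 3 := by
  obtain ⟨h1, h2⟩ := invAck_spec n
  generalize invAck n = a at *
  match a, h1, h2 with
  | 1, _, h2 =>
    simp only [alphaHier] at h2
    change n ≤ Ak 0 3
    rw [Ak]
    omega
  | d + 2, _, h2 => exact alphaHier_galois d n 3 h2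

/-- growth class `2 ^ (x ^ (u+1) / (u+1)! + O (x ^ u))` with `x = d + 1` -/
def Gr (u : ℕ) (f : ℕ → ℕ) : Prop :=
  ∃ C : ℝ, 0 ≤ C ∧ ∀ d : ℕ, (f d : ℝ) ≤
    (2:ℝ) ^ (((d:ℝ) + 1) ^ (u+1) / ((u+1).factorial : ℝ) + C * ((d:ℝ) + 1) ^ u)

theorem pow_succ_upper (x : ℝ) (hx : 1 ≤ x) (t : ℕ) :
    (x+1) ^ (t+1) ≤ x ^ (t+1) + 3 ^ (t+1) * x ^ t := by
  induction t with
  | zero => norm_num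
  | succ t ih =>
    have hp : 0 < x ^ t := by positivity
    have h3 : (1:ℝ) ≤ 3 ^ (t+1) := one_le_pow₀ (by norm_num)
    have h4 : x ^ t ≤ x ^ (t+1) := pow_le_pow_right₀ hx (by omega)
    calc (x+1) ^ (t+1+1) = (x+1) ^ (t+1) * (x+1) := by ring
      _ ≤ (x ^ (t+1) + 3 ^ (t+1) * x ^ t) * (x+1) := by gcongr
      _ = x ^ (t+2) + x ^ (t+1) + 3 ^ (t+1) * x ^ (t+1) + 3 ^ (t+1) * x ^ t := by ring
      _ ≤ x ^ (t+2) + 3 ^ (t+1) * x ^ (t+1) + 3 ^ (t+1) * x ^ (t+1) + 3 ^ (t+1) * x ^ (t+1) := by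
        have : x ^ (t+1) ≤ 3 ^ (t+1) * x ^ (t+1) := le_mul_of_one_le_left (by positivity) h3
        gcongr
      _ = _ := by ring

theorem pow_succ_lower (x : ℝ) (hx : 1 ≤ x) (t : ℕ) :
    x ^ (t+1) + (t+1) * x ^ t ≤ (x+1) ^ (t+1) := by
  induction t with
  | zero => simp
  | succ t ih =>
    have hp : 0 < x ^ t := by positivity
    calc x ^ (t+1+1) + ((t+1 : ℕ) + 1) * x ^ (t+1)
        ≤ x ^ (t+1+1) + ((t+1 : ℕ) + 1) * x ^ (t+1) + (t+1) * x ^ t := by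
          have : 0 ≤ (t+1:ℝ) * x ^ t := by positivity
          linarith
      _ = (x ^ (t+1) + (t+1) * x ^ t) * (x+1) := by push_cast; ring
      _ ≤ (x+1) ^ (t+1) * (x+1) := by gcongr
      _ = _ := by ring

theorem cast_le_two_rpow (K : ℕ) : (K:ℝ) ≤ (2:ℝ) ^ (K:ℝ) := by
  rw [Real.rpow_natCast]
  exact_mod_cast (Nat.lt_two_pow_self).le

theorem Gr_of_le (u K : ℕ) (f : ℕ → ℕ) (h : ∀ d, f d ≤ K) : Gr u f := by
  refine ⟨K, by positivity, fun d => ?_⟩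
  have h1 : (1:ℝ) ≤ ((d:ℝ)+1) ^ u := one_le_pow₀ (by linarith [(Nat.cast_nonneg d : (0:ℝ) ≤ d)])
  calc (f d : ℝ) ≤ K := by exact_mod_cast h d
    _ ≤ (2:ℝ) ^ (K:ℝ) := cast_le_two_rpow K
    _ ≤ _ := by
      apply Real.rpow_le_rpow_of_exponent_le (by norm_num)
      have : (K:ℝ) ≤ K * ((d:ℝ)+1) ^ u := le_mul_of_one_le_right (by positivity) h1
      have : 0 ≤ ((d:ℝ)+1) ^ (u+1) / ((u+1).factorial : ℝ) := by positivity
      linarith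

theorem Gr_step (u K : ℕ) (f g h : ℕ → ℕ) (hf : Gr u f) (hh : Gr (u+1) h) (h0 : g 0 ≤ K)
    (hg : ∀ d, g (d+1) ≤ K * h (d+1) + K * f (d+1) * g d) : Gr (u+1) g := by
  obtain ⟨Cf, hCf, hf⟩ := hf
  obtain ⟨Ch, hCh, hh⟩ := hh
  set C : ℝ := Cf * 2 ^ u + Ch + K + 1 + 3 ^ (u+1) with hC
  have hCpos : 0 ≤ C := by positivity
  refine ⟨C, hCpos, fun d => ?_⟩
  induction d with
  | zero =>
    calc (g 0 : ℝ) ≤ K := by exact_mod_cast h0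
      _ ≤ (2:ℝ) ^ (K:ℝ) := cast_le_two_rpow K
      _ ≤ _ := by
        apply Real.rpow_le_rpow_of_exponent_le (by norm_num)
        simp only [Nat.cast_zero, zero_add, one_pow, mul_one]
        have h1 : 0 ≤ (1:ℝ) / ((u+1+1).factorial : ℝ) := by positivity
        have h2 : (K:ℝ) ≤ C := by
          have : 0 ≤ Cf * 2 ^ u + Ch + 1 + 3 ^ (u+1) := by positivity
          linarith
        linarith
  | succ d ih =>
    have hfd := hf (d+1)
    have hhd := hh (d+1)
    push_cast at hfd hhd ⊢
    set x : ℝ := (d:ℝ) + 1 with hx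
    have hx1 : 1 ≤ x := by rw [hx]; linarith [(Nat.cast_nonneg d : (0:ℝ) ≤ d)]
    set E := (x+1) ^ (u+1+1) / ((u+1+1).factorial : ℝ) + C * (x+1) ^ (u+1) with hE
    have hxu : 1 ≤ x ^ u := one_le_pow₀ hx1
    have hxu1 : 1 ≤ (x+1) ^ (u+1) := one_le_pow₀ (by linarith)
    have two : (2:ℝ) ^ E = (2:ℝ) ^ (E-1) + (2:ℝ) ^ (E-1) := by
      rw [← two_mul]
      nth_rewrite 2 [← Real.rpow_one 2]
      rw [← Real.rpow_add (by norm_num)]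
      congr 1; ring
    have A : (K:ℝ) * h (d+1) ≤ (2:ℝ) ^ (E-1) := by
      calc (K:ℝ) * h (d+1) ≤ (2:ℝ) ^ (K:ℝ) * (2:ℝ) ^ ((x+1) ^ (u+1+1) / ((u+1+1).factorial : ℝ)
            + Ch * (x+1) ^ (u+1)) := by
            gcongr
            exact cast_le_two_rpow K
        _ = (2:ℝ) ^ (K + ((x+1) ^ (u+1+1) / ((u+1+1).factorial : ℝ) + Ch * (x+1) ^ (u+1))) := by
            simp only [Real.rpow_add (zero_lt_two : (0:ℝ) < 2)]
        _ ≤ _ := by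
            apply Real.rpow_le_rpow_of_exponent_le (by norm_num)
            have h1 : (Ch + (K + 1)) * (x+1) ^ (u+1) ≤ C * (x+1) ^ (u+1) := by
              gcongr
              have : 0 ≤ Cf * 2 ^ u + 3 ^ (u+1) := by positivity
              linarith
            have h2 : (K+1 : ℝ) ≤ (K + 1) * (x+1) ^ (u+1) :=
              le_mul_of_one_le_right (by positivity) hxu1
            rw [hE]
            linarith
    have B : (K:ℝ) * f (d+1) * g d ≤ (2:ℝ) ^ (E-1) := by
      calc (K:ℝ) * f (d+1) * g d ≤ (2:ℝ) ^ (K:ℝ) * (2:ℝ) ^ ((x+1) ^ (u+1) / ((u+1).factorial : ℝ)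
            + Cf * (x+1) ^ u) * (2:ℝ) ^ (x ^ (u+1+1) / ((u+1+1).factorial : ℝ) + C * x ^ (u+1)) := by
            gcongr
            exact cast_le_two_rpow K
        _ = (2:ℝ) ^ (K + ((x+1) ^ (u+1) / ((u+1).factorial : ℝ) + Cf * (x+1) ^ u)
            + (x ^ (u+1+1) / ((u+1+1).factorial : ℝ) + C * x ^ (u+1))) := by
            simp only [Real.rpow_add (zero_lt_two : (0:ℝ) < 2)]
        _ ≤ _ := by
            apply Real.rpow_le_rpow_of_exponent_le (by norm_num)
            have hfac : ((u+1+1).factorial : ℝ) = ((u:ℝ)+1+1) * ((u+1).factorial : ℝ) := by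
              rw [Nat.factorial_succ (u+1)]; push_cast; ring
            have hfp : (1:ℝ) ≤ ((u+1).factorial : ℝ) := by
              exact_mod_cast Nat.one_le_iff_ne_zero.mpr (Nat.factorial_ne_zero _)
            have h1 : x ^ (u+1+1) / ((u+1+1).factorial : ℝ) + x ^ (u+1) / ((u+1).factorial : ℝ)
                ≤ (x+1) ^ (u+1+1) / ((u+1+1).factorial : ℝ) := by
              have := pow_succ_lower x hx1 (u+1)
              push_cast at this
              calc _ = (x ^ (u+1+1) + ((u:ℝ)+1+1) * x ^ (u+1)) / ((u+1+1).factorial : ℝ) := by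
                    rw [add_div]
                    congr 1
                    rw [hfac]
                    field_simp
                _ ≤ _ := by gcongr
            have h2 : (x+1) ^ (u+1) / ((u+1).factorial : ℝ) ≤
                x ^ (u+1) / ((u+1).factorial : ℝ) + 3 ^ (u+1) * x ^ u := by
              calc _ ≤ (x ^ (u+1) + 3 ^ (u+1) * x ^ u) / ((u+1).factorial : ℝ) := by
                    gcongr; exact pow_succ_upper x hx1 u
                _ = x ^ (u+1) / ((u+1).factorial : ℝ)
                    + 3 ^ (u+1) * x ^ u / ((u+1).factorial : ℝ) := add_div _ _ _
                _ ≤ _ := by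
                    gcongr
                    exact div_le_self (by positivity) hfp
            have h3 : Cf * (x+1) ^ u ≤ Cf * 2 ^ u * x ^ u := by
              rw [mul_assoc, ← mul_pow]
              gcongr
              linarith
            have h4 : (K:ℝ) + 1 ≤ (K+1) * x ^ u := le_mul_of_one_le_right (by positivity) hxu
            have h5 : C * x ^ (u+1) + C * x ^ u ≤ C * (x+1) ^ (u+1) := by
              rw [← mul_add]
              gcongr
              have := pow_succ_lower x hx1 u
              have : 0 ≤ (u:ℝ) * x ^ u := by positivity
              linarith
            have h6 : Cf * 2 ^ u * x ^ u + (K+1) * x ^ u + 3 ^ (u+1) * x ^ u ≤ C * x ^ u := by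
              rw [← add_mul, ← add_mul]
              gcongr
              linarith
            rw [hE]
            linarith
    calc (g (d+1) : ℝ) ≤ K * h (d+1) + K * f (d+1) * g d := by exact_mod_cast hg d
      _ ≤ _ := by rw [two]; exact add_le_add A B

theorem Gr_add (u : ℕ) (f g : ℕ → ℕ) (hf : Gr u f) (hg : Gr u g) : Gr u (fun d => f d + g d) := by
  obtain ⟨Cf, hCf, hf⟩ := hf
  obtain ⟨Cg, hCg, hg⟩ := hg
  refine ⟨Cf + Cg + 1, by positivity, fun d => ?_⟩
  have hfd := hf d
  have hgd := hg d
  set x : ℝ := (d:ℝ) + 1 with hx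
  have hx1 : 1 ≤ x := by rw [hx]; linarith [(Nat.cast_nonneg d : (0:ℝ) ≤ d)]
  have hxu : 1 ≤ x ^ u := one_le_pow₀ hx1
  set E := x ^ (u+1) / ((u+1).factorial : ℝ) + (Cf + Cg + 1) * x ^ u with hE
  have two : (2:ℝ) ^ E = (2:ℝ) ^ (E-1) + (2:ℝ) ^ (E-1) := by
    rw [← two_mul]
    nth_rewrite 2 [← Real.rpow_one 2]
    rw [← Real.rpow_add (by norm_num)]
    congr 1; ring
  have pf : 0 ≤ Cf * x ^ u := by positivity
  have pg : 0 ≤ Cg * x ^ u := by positivity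
  push_cast
  rw [two]
  refine add_le_add (hfd.trans ?_) (hgd.trans ?_) <;>
  · apply Real.rpow_le_rpow_of_exponent_le (by norm_num)
    rw [hE]
    linarith

theorem Gr_mul_const (u K : ℕ) (f : ℕ → ℕ) (hf : Gr u f) : Gr u (fun d => K * f d) := by
  induction K with
  | zero => exact Gr_of_le u 0 _ (by simp)
  | succ K ih =>
    have := Gr_add u _ _ ih hf
    simpa only [add_mul, one_mul] using this

theorem Gr_mono (u : ℕ) (f g : ℕ → ℕ) (hg : Gr u g) (h : ∀ d, f d ≤ g d) : Gr u f := by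
  obtain ⟨C, hC, hg⟩ := hg
  exact ⟨C, hC, fun d => le_trans (by exact_mod_cast h d) (hg d)⟩

theorem Qf_three (d : ℕ) : Qf 3 d = 2 := by
  cases d <;> rw [Qf] <;> simp [Qf]

theorem Qf_four (d : ℕ) : Qf 4 d = 6 + 4 * d := by
  induction d with
  | zero => rw [Qf, Qf_three]; simp [Qf]
  | succ d ih => rw [Qf, Qf_three, ih]; simp [Qf]; ring

theorem Qf_five (d : ℕ) : Qf 5 d + (8 * d + 28) = 44 * 2 ^ d := by
  induction d with
  | zero => rw [Qf, Qf_four, Qf_three]; norm_num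
  | succ d ih =>
    rw [Qf.eq_5, Qf_four, Qf_three, pow_succ]
    norm_num
    omega

theorem Gr_exp : Gr 0 (fun d => 44 * 2 ^ d) := by
  refine ⟨5, by norm_num, fun d => ?_⟩
  have : (2:ℝ) ^ (((d:ℝ) + 1) ^ (0+1) / ((0+1).factorial : ℝ) + 5 * ((d:ℝ) + 1) ^ 0)
      = 2 ^ (d + 6) := by
    rw [← Real.rpow_natCast 2 (d+6)]
    congr 1
    push_cast
    norm_num [Nat.factorial]
    ring
  rw [this, pow_add]
  push_cast
  have : (0:ℝ) < 2 ^ d := by positivity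
  linarith

theorem Qf_growth (u : ℕ) : ∀ s, s ≤ 2 * u + 5 → Gr u (Qf s) := by
  induction u with
  | zero =>
    intro s hs
    apply Gr_mono 0 _ _ Gr_exp
    intro d
    have h1 : d < 2 ^ d := Nat.lt_two_pow_self
    have h5 := Qf_five d
    have h4 := Qf_four d
    have h3 := Qf_three d
    have h2 : Qf 2 d = 1 := by rw [Qf]
    have h10 : Qf 1 d = 0 := by rw [Qf]
    have h0 : Qf 0 d = 0 := by rw [Qf]
    interval_cases s <;> omega
  | succ u ihu =>
    intro s
    induction s using Nat.strong_induction_on with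
    | _ s ih =>
      intro hs
      match s, ih, hs with
      | 0, _, _ => exact Gr_of_le _ 0 _ (fun d => by rw [Qf])
      | 1, _, _ => exact Gr_of_le _ 0 _ (fun d => by rw [Qf])
      | 2, _, _ => exact Gr_of_le _ 1 _ (fun d => by rw [Qf])
      | s + 3, ih, hs =>
        refine Gr_step u (2 + Qf (s+3) 0) (Qf (s+1)) _ (Qf (s+2)) (ihu _ (by omega))
          (ih (s+2) (by omega) (by omega)) (by omega) (fun d => ?_)
        rw [Qf.eq_5 s d]
        have h1 : 2 * Qf (s+2) (d+1) ≤ (2 + Qf (s+3) 0) * Qf (s+2) (d+1) := by gcongr; omega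
        have h2 : 1 * Qf (s+1) (d+1) * Qf (s+3) d ≤
          (2 + Qf (s+3) 0) * Qf (s+1) (d+1) * Qf (s+3) d := by gcongr; omega
        rw [one_mul] at h2
        exact add_le_add h1 h2

theorem Pf_growth (e u : ℕ) : ∀ s, s ≤ 2 * u + 7 → Gr (u+1) (Pf e s) := by
  intro s
  induction s using Nat.strong_induction_on with
  | _ s ih =>
    intro hs
    match s, ih, hs with
    | 0, _, _ => exact Gr_of_le _ (Pf e 0 0 + 1) _ (fun d => by
        cases d with
        | zero => omega
        | succ d => rw [Pf.eq_2]; omega)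
    | 1, _, _ => exact Gr_of_le _ (Pf e 1 0 + 1) _ (fun d => by
        cases d with
        | zero => omega
        | succ d => rw [Pf.eq_3]; omega)
    | s + 2, ih, hs =>
      refine Gr_step u (2 * 2 ^ (s+2) + Pf e (s+2) 0) (Qf s) _
        (fun d => 2 * Pf e (s+1) d + Pf e s d) (Qf_growth u s (by omega))
        (Gr_add _ _ _ (Gr_mul_const _ _ _ (ih (s+1) (by omega) (by omega)))
          (ih s (by omega) (by omega))) (by omega) (fun d => ?_)
      rw [Pf.eq_4]
      have h2 : 2 * 2 ^ (s+2) * Qf s (d+1) * Pf e (s+2) d ≤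
          (2 * 2 ^ (s+2) + Pf e (s+2) 0) * Qf s (d+1) * Pf e (s+2) d := by gcongr; omega
      have h3 : 1 ≤ 2 ^ (s+2) := Nat.one_le_two_pow
      exact add_le_add (Nat.le_mul_of_pos_left _ (by omega)) h2

/-- the quantitative input: a bound for the number of ones, uniform in the number of rows -/
theorem zeta_bound (t : ℕ) (ht : 2 ≤ t) : ∃ C : ℝ, 0 ≤ C ∧ ∀ N : ℕ, ∃ ζ : ℕ, 1 ≤ ζ ∧
    (ζ : ℝ) ≤ (2:ℝ) ^ ((invAck N : ℝ) ^ t / (t.factorial : ℝ) + C * (invAck N : ℝ) ^ (t-1)) ∧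
    ∀ m, m ≤ N → ∀ γ : Type, Bd γ (2*t+3) m ζ ζ := by
  obtain ⟨u, rfl⟩ : ∃ u, t = u + 2 := ⟨t - 2, by omega⟩
  set s := 2 * (u+2) + 3 with hs
  obtain ⟨C, hC, h⟩ := Gr_add (u+1) _ _ (Gr_mul_const _ (4 ^ s) _ (Pf_growth s u s (by omega)))
    (Qf_growth (u+1) s (by omega))
  refine ⟨C, hC, fun N => ?_⟩
  set d := invAck N - 2 with hd
  refine ⟨_, ?_, (h d).trans ?_, ?_⟩
  · have := Qf_pos (s-2) d
    rw [show s - 2 + 2 = s by omega] at this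
    exact this.trans (Nat.le_add_left _ _)
  · apply Real.rpow_le_rpow_of_exponent_le (by norm_num)
    have h1 := (invAck_spec N).1
    have h2 : ((d:ℝ) + 1) ≤ invAck N := by
      have : d + 1 ≤ invAck N := by omega
      exact_mod_cast this
    have h0 : (0:ℝ) ≤ (d:ℝ) + 1 := by positivity
    simp only [show u + 2 - 1 = u + 1 by omega]
    gcongr
  · intro m hm γ
    have h1 : m ≤ Ak d 3 ^ s :=
      (hm.trans (le_Ak N)).trans (Nat.le_self_pow (by omega) _)
    refine (Bd_main γ s (by omega) d s 3 m le_rfl h1).mono ?_ ?_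
    · have : Pf s s d * (3+1) ^ s = 4 ^ s * Pf s s d := by ring
      rw [this]
      exact Nat.le_add_right _ _
    · exact Nat.le_add_left _ _

section Peeling

variable {ι : Type} [Fintype ι] [DecidableEq ι]

/-- no `k + 1` coordinates in `A` realize all patterns with respect to a division into intervals -/
def DimLE (A : Finset ι) (k : ℕ) (F : Finset (ι → ℕ)) : Prop :=
  ∀ J ⊆ A, ∀ g : ℕ → Fin (k+1), Monotone g →
    (∀ z : ι → Fin (k+1), ∃ f ∈ F, ∀ j ∈ J, g (f j) = z j) → J.card ≤ k

/-- index of the interval containing `v` -/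
def cutIdx (k : ℕ) (x : ℕ → ℕ) (v : ℕ) : Fin (k+1) :=
  ⟨((Finset.range k).filter (fun i => x (i+1) ≤ v)).card,
    Nat.lt_succ_of_le ((Finset.card_filter_le _ _).trans (by simp))⟩

theorem cutIdx_mono (k : ℕ) (x : ℕ → ℕ) : Monotone (cutIdx k x) := by
  intro v w h
  refine Fin.mk_le_mk.mpr (Finset.card_le_card ?_)
  intro i hi
  simp only [Finset.mem_filter] at hi ⊢
  exact ⟨hi.1, hi.2.trans h⟩

theorem cutIdx_eq (k : ℕ) (x : ℕ → ℕ) (hx : Monotone x) (v i : ℕ) (hi : i < k+1)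
    (h1 : x i ≤ v) (h2 : v < x (i+1)) : cutIdx k x v = ⟨i, hi⟩ := by
  refine Fin.ext ?_
  change ((Finset.range k).filter (fun i => x (i+1) ≤ v)).card = i
  have : (Finset.range k).filter (fun i => x (i+1) ≤ v) = Finset.range i := by
    ext j
    simp only [Finset.mem_filter, Finset.mem_range]
    constructor
    · rintro ⟨hj, hj2⟩
      by_contra hc
      have := hx (show i + 1 ≤ j + 1 by omega)
      omega
    · intro hj
      exact ⟨by omega, (hx (show j + 1 ≤ i by omega)).trans h1⟩
  rw [this, Finset.card_range]

theorem peel_one {m ζ k : ℕ} (hB : ∀ γ : Type, Bd γ (k+1) m ζ ζ) (A : Finset ι)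
    (F : Finset (ι → ℕ)) (hv : ∀ f ∈ F, ∀ j, f j < m) (hF : DimLE A k F) (hne : F.Nonempty)
    (hA : 2 * ζ * k * m < A.card) :
    ∃ j ∈ A, F.card < 2 * ζ * (F.image (fun f => Function.update f j 0)).card := by
  classical
  by_contra hc
  push Not at hc
  set φ : ι × (ι → ℕ) → ι × (ι → ℕ) := fun p => (p.1, Function.update p.2 p.1 0) with hφ
  set C : Finset (ι × (ι → ℕ)) := (A ×ˢ F).image φ with hC
  set S : ι × (ι → ℕ) → Finset ℕ :=
    fun c => (Finset.range m).filter (fun v => Function.update c.2 c.1 v ∈ F) with hS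
  have hNF : NF (k+1) (k * F.card) C S := by
    intro x hx D hD hfull
    refine lines_bound A k F (cutIdx k x) (fun J hJ h => hF J hJ _ (cutIdx_mono k x) h) D ?_
    intro p hp
    obtain ⟨q, hq, rfl⟩ := Finset.mem_image.mp (hD hp)
    refine ⟨(Finset.mem_product.mp hq).1, by simp [hφ], ?_⟩
    rintro ⟨i, hi⟩
    obtain ⟨v, hv1, hv2, hv3⟩ := hfull _ hp i hi
    exact ⟨v, cutIdx_eq k x hx v i hi hv2 hv3, (Finset.mem_filter.mp hv1).2⟩
  have hb := hB _ (k * F.card) 0 C S (fun c _ v hvm => by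
    have := Finset.mem_range.mp (Finset.mem_filter.mp hvm).1
    simpa using this) hNF
  have hones : A.card * F.card ≤ ∑ c ∈ C, (S c).card := by
    rw [← Finset.card_product, Finset.card_eq_sum_card_fiberwise (f := φ) (t := C)
      (fun p hp => Finset.mem_image_of_mem _ hp)]
    refine Finset.sum_le_sum fun c _ => ?_
    refine Finset.card_le_card_of_injOn (fun p => p.2 p.1) ?_ ?_
    · intro p hp
      obtain ⟨hp1, rfl⟩ := Finset.mem_filter.mp hp
      have hp2 := (Finset.mem_product.mp hp1).2
      refine Finset.mem_coe.mpr (Finset.mem_filter.mpr ⟨Finset.mem_range.mpr (hv _ hp2 _), ?_⟩)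
      simpa [hφ] using hp2
    · intro p hp q hq h
      have h1 := (Finset.mem_filter.mp hp).2
      have h2 := (Finset.mem_filter.mp hq).2
      rw [← h2] at h1
      simp only [hφ, Prod.mk.injEq] at h1
      obtain ⟨e1, e2⟩ := h1
      refine Prod.ext e1 ?_
      have := congrArg (fun f => Function.update f p.1 (p.2 p.1)) e2
      simp only [Function.update_idem, Function.update_eq_self] at this
      rw [this]
      dsimp only at h
      rw [h, e1]
      simp
  have hcols : C.card ≤ ∑ j ∈ A, (F.image (fun f => Function.update f j 0)).card := by
    rw [Finset.card_eq_sum_card_fiberwise (f := Prod.fst) (t := A)]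
    · refine Finset.sum_le_sum fun j _ => ?_
      refine Finset.card_le_card_of_injOn Prod.snd ?_ ?_
      · intro p hp
        obtain ⟨hp1, rfl⟩ := Finset.mem_filter.mp hp
        obtain ⟨q, hq, rfl⟩ := Finset.mem_image.mp hp1
        exact Finset.mem_coe.mpr (Finset.mem_image_of_mem _ (Finset.mem_product.mp hq).2)
      · intro p hp q hq h
        exact Prod.ext ((Finset.mem_filter.mp hp).2.trans (Finset.mem_filter.mp hq).2.symm) h
    · intro p hp
      obtain ⟨q, hq, rfl⟩ := Finset.mem_image.mp hp
      exact (Finset.mem_product.mp hq).1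
  have hsum : 2 * ζ * ∑ j ∈ A, (F.image (fun f => Function.update f j 0)).card
      ≤ A.card * F.card := by
    rw [Finset.mul_sum]
    exact Finset.sum_le_card_nsmul A _ _ hc
  have hpos : 0 < F.card := hne.card_pos
  have h1 : A.card * F.card ≤ 2 * ζ * k * m * F.card := by
    have : 2 * (ζ * C.card) ≤ A.card * F.card := by
      calc _ = 2 * ζ * C.card := by ring
        _ ≤ _ := (Nat.mul_le_mul_left _ hcols).trans hsum
    have h3 : 2 * (ζ * (k * F.card) * m) = 2 * ζ * k * m * F.card := by ring
    have h4 := hones.trans hb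
    omega
  have := Nat.le_of_mul_le_mul_right h1 hpos
  omega

/-- keep only the coordinates in `A` -/
def proj (A : Finset ι) (f : ι → ℕ) : ι → ℕ := fun j => if j ∈ A then f j else 0

theorem peel {m ζ k : ℕ} (hm : 0 < m) (hζ : 1 ≤ ζ) (hB : ∀ γ : Type, Bd γ (k+1) m ζ ζ) :
    ∀ (c : ℕ) (A : Finset ι) (F : Finset (ι → ℕ)), A.card = c → (∀ f ∈ F, ∀ j, f j < m) →
      (∀ f ∈ F, ∀ j ∉ A, f j = 0) → DimLE A k F →
      ∃ A' ⊆ A, A'.card ≤ 2 * ζ * k * m ∧ F.card ≤ (2 * ζ) ^ c * (F.image (proj A')).card := by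
  intro c
  induction c with
  | zero =>
    intro A F hA hv hs _
    refine ⟨∅, Finset.empty_subset _, by simp, ?_⟩
    rw [pow_zero, one_mul, Finset.card_image_of_injOn]
    intro f hf g hg _
    have : A = ∅ := Finset.card_eq_zero.mp hA
    subst this
    funext j
    rw [hs f hf j (by simp), hs g hg j (by simp)]
  | succ c ih =>
    intro A F hA hv hs hd
    by_cases hb : A.card ≤ 2 * ζ * k * m
    · refine ⟨A, subset_rfl, hb, ?_⟩
      rw [Finset.card_image_of_injOn]
      · exact Nat.le_mul_of_pos_left _ (by positivity)
      · intro f hf g hg h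
        funext j
        by_cases hj : j ∈ A
        · have := congrFun h j
          simpa [proj, hj] using this
        · rw [hs f hf j hj, hs g hg j hj]
    · rcases F.eq_empty_or_nonempty with rfl | hne
      · exact ⟨∅, Finset.empty_subset _, by simp, by simp⟩
      obtain ⟨j, hj, hcard⟩ := peel_one hB A F hv hd hne (by omega)
      set G := F.image (fun f => Function.update f j 0) with hG
      obtain ⟨A', hA', hA'c, hle⟩ := ih (A.erase j) G (by rw [Finset.card_erase_of_mem hj]; omega)
        (by
          intro f hf i
          obtain ⟨g, hg, rfl⟩ := Finset.mem_image.mp hf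
          by_cases hij : i = j
          · subst hij; simpa using hm
          · simpa [Function.update_of_ne hij] using hv g hg i)
        (by
          intro f hf i hi
          obtain ⟨g, hg, rfl⟩ := Finset.mem_image.mp hf
          by_cases hij : i = j
          · subst hij; simp
          · rw [Function.update_of_ne hij]
            exact hs g hg i (fun h => hi (Finset.mem_erase.mpr ⟨hij, h⟩)))
        (by
          intro J hJ g hg hz
          refine hd J (hJ.trans (Finset.erase_subset _ _)) g hg fun z => ?_
          obtain ⟨f, hf, h⟩ := hz z
          obtain ⟨f0, hf0, rfl⟩ := Finset.mem_image.mp hf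
          refine ⟨f0, hf0, fun i hi => ?_⟩
          have hij : i ≠ j := (Finset.mem_erase.mp (hJ hi)).1
          have := h i hi
          rwa [Function.update_of_ne hij] at this)
      refine ⟨A', hA'.trans (Finset.erase_subset _ _), hA'c, ?_⟩
      have himg : G.image (proj A') = F.image (proj A') := by
        rw [hG, Finset.image_image]
        refine Finset.image_congr fun f _ => ?_
        funext i
        simp only [Function.comp, proj]
        split_ifs with hi
        · rw [Function.update_of_ne (Finset.mem_erase.mp (hA' hi)).1]
        · rfl
      rw [himg] at hle
      calc F.card ≤ 2 * ζ * G.card := hcard.le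
        _ ≤ 2 * ζ * ((2 * ζ) ^ c * (F.image (proj A')).card) := Nat.mul_le_mul_left _ hle
        _ = _ := by ring

end Peeling

theorem exists_pattern {a : ℕ} (f : Fin a → ℕ) (hf : Function.Injective f) :
    ∃ σ : Equiv.Perm (Fin a), ∀ i j, σ i < σ j ↔ f i < f j := by
  refine ⟨(Tuple.sort f)⁻¹, fun i j => ?_⟩
  have h1 : StrictMono (f ∘ Tuple.sort f) :=
    (Tuple.monotone_sort f).strictMono_of_injective (hf.comp (Tuple.sort f).injective)
  have h2 := h1.lt_iff_lt (a := (Tuple.sort f)⁻¹ i) (b := (Tuple.sort f)⁻¹ j)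
  simpa using h2.symm

/-- block values of a permutation -/
def blk {n : ℕ} (q : ℕ) (π : Equiv.Perm (Fin n)) : Fin n → ℕ := fun j => (π j).val / q

theorem card_blk {n q : ℕ} (hq : 1 ≤ q) (P : Finset (Equiv.Perm (Fin n))) :
    P.card ≤ (P.image (blk q)).card * q ^ n := by
  classical
  have : P.card ≤ ((P.image (blk q)) ×ˢ (Finset.univ : Finset (Fin n → Fin q))).card := by
    refine Finset.card_le_card_of_injOn
      (fun π => (blk q π, fun j => ⟨(π j).val % q, Nat.mod_lt _ hq⟩)) ?_ ?_
    · intro π hπ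
      exact Finset.mem_coe.mpr (Finset.mem_product.mpr
        ⟨Finset.mem_image_of_mem _ hπ, Finset.mem_univ _⟩)
    · intro π _ π' _ h
      simp only [Prod.mk.injEq] at h
      refine Equiv.ext fun j => Fin.ext ?_
      have h1 : (π j).val / q = (π' j).val / q := congrFun h.1 j
      have h2 : (π j).val % q = (π' j).val % q := congrArg Fin.val (congrFun h.2 j)
      rw [← Nat.div_add_mod (π j).val q, h1, h2, Nat.div_add_mod]
  simpa using this

theorem dim_blk {n q k : ℕ} (P : Finset (Equiv.Perm (Fin n)))
    (hP : VCDimLE n k P) : DimLE Finset.univ k (P.image (blk q)) := by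
  intro J _ g hg hz
  by_contra hc
  obtain ⟨J', hJ', hcard⟩ := Finset.exists_subset_card_eq (show k + 1 ≤ J.card by omega)
  set a := J'.orderEmbOfFin hcard with ha
  refine hP a ⟨a.strictMono, fun σ => ?_⟩
  obtain ⟨f, hf, h⟩ := hz (Function.extend a σ 0)
  obtain ⟨π, hπ, rfl⟩ := Finset.mem_image.mp hf
  refine ⟨π, hπ, ?_⟩
  have key : ∀ i, g ((π (a i)).val / q) = σ i := fun i => by
    have := h (a i) (hJ' (Finset.orderEmbOfFin_mem _ _ _))
    rwa [a.injective.extend_apply] at this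
  have fwd : ∀ i j, σ i < σ j → π (a i) < π (a j) := by
    intro i j hij
    rw [← key, ← key] at hij
    have h1 := hg.reflect_lt hij
    by_contra hcon
    exact absurd (Nat.div_le_div_right (c := q) (Fin.le_def.mp (not_lt.mp hcon))) (by omega)
  intro i j
  refine ⟨fwd i j, fun hij => ?_⟩
  rcases lt_trichotomy (σ i) (σ j) with h1 | h1 | h1
  · exact h1
  · rw [σ.injective h1] at hij; exact absurd hij (lt_irrefl _)
  · exact absurd (fwd j i h1) (not_lt.mpr hij.le)

theorem restrict_count {n q k m : ℕ} (P : Finset (Equiv.Perm (Fin n)))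
    (hP : VCDimLE n k P) (hm : ∀ v : Fin n, v.val / q < m) (A : Finset (Fin n)) :
    ∃ P' : Finset (Equiv.Perm (Fin A.card)), VCDimLE A.card k P' ∧
      ((P.image (blk q)).image (proj A)).card ≤ P'.card * 2 ^ (A.card + m) := by
  classical
  set e := A.orderEmbOfFin rfl with he
  have hex : ∀ π : Equiv.Perm (Fin n), ∃ σ : Equiv.Perm (Fin A.card),
      ∀ i j, σ i < σ j ↔ (π (e i)).val < (π (e j)).val := fun π =>
    exists_pattern (fun i => (π (e i)).val)
      (Fin.val_injective.comp (π.injective.comp e.injective))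
  choose pat hpat using hex
  refine ⟨P.image pat, ?_, ?_⟩
  · rintro b ⟨hb, hsh⟩
    refine hP (e ∘ b) ⟨e.strictMono.comp hb, fun τ => ?_⟩
    obtain ⟨σ, hσ, h⟩ := hsh τ
    obtain ⟨π, hπ, rfl⟩ := Finset.mem_image.mp hσ
    exact ⟨π, hπ, fun i j => (h i j).trans (hpat π _ _)⟩
  · set hh : Equiv.Perm (Fin n) → Fin A.card → ℕ :=
      fun π i => (π (e ((pat π).symm i))).val / q + i.val with hhh
    have hmono : ∀ π, StrictMono (hh π) := by
      intro π i j hij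
      have h1 : (π (e ((pat π).symm i))).val < (π (e ((pat π).symm j))).val := by
        rw [← hpat π]; simpa using hij
      have h2 := Nat.div_le_div_right (c := q) h1.le
      have h3 : i.val < j.val := hij
      simp only [hhh]
      omega
    set ψ : Equiv.Perm (Fin n) → Equiv.Perm (Fin A.card) × Finset ℕ :=
      fun π => (pat π, Finset.univ.image (hh π)) with hψ
    have hfac : Function.FactorsThrough (proj A ∘ blk q : Equiv.Perm (Fin n) → Fin n → ℕ) ψ := by
      intro π π' h
      simp only [hψ, Prod.mk.injEq] at h
      obtain ⟨h1, h2⟩ := h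
      have h3 : hh π = hh π' := by
        apply (StrictMono.range_inj (hmono π) (hmono π')).mp
        have := congrArg (fun s : Finset ℕ => (s : Set ℕ)) h2
        simpa using this
      funext j
      simp only [Function.comp, proj]
      split_ifs with hj
      · have : j ∈ Set.range e := by rw [he, Finset.range_orderEmbOfFin]; exact hj
        obtain ⟨i, rfl⟩ := this
        have h4 := congrFun h3 (pat π i)
        simp only [hhh, ← h1, Equiv.symm_apply_apply] at h4
        simp only [blk]
        omega
      · rfl
    calc ((P.image (blk q)).image (proj A)).card
        = ((P.image ψ).image
            (Function.extend ψ (proj A ∘ blk q : Equiv.Perm (Fin n) → Fin n → ℕ) 0)).card := by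
          rw [Finset.image_image, Finset.image_image]
          congr 1
          refine Finset.image_congr fun π _ => ?_
          exact (hfac.extend_apply 0 π).symm
      _ ≤ (P.image ψ).card := Finset.card_image_le
      _ ≤ ((P.image pat) ×ˢ (Finset.range (A.card + m)).powerset).card := by
          refine Finset.card_le_card fun x hx => ?_
          obtain ⟨π, hπ, rfl⟩ := Finset.mem_image.mp hx
          refine Finset.mem_product.mpr ⟨Finset.mem_image_of_mem _ hπ, ?_⟩
          refine Finset.mem_powerset.mpr fun v hv => ?_
          obtain ⟨i, _, rfl⟩ := Finset.mem_image.mp hv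
          have h1 := hm (π (e ((pat π).symm i)))
          have h2 := i.isLt
          simp only [hhh, Finset.mem_range]
          omega
      _ = _ := by rw [Finset.card_product, Finset.card_powerset, Finset.card_range]

theorem perm_step {n q k m ζ : ℕ} (hq : 1 ≤ q) (hζ : 1 ≤ ζ)
    (hm : ∀ v : Fin n, v.val / q < m) (hm0 : 0 < m)
    (hB : ∀ γ : Type, Bd γ (k+1) m ζ ζ) (P : Finset (Equiv.Perm (Fin n))) (hP : VCDimLE n k P) :
    ∃ a, a ≤ 2 * ζ * k * m ∧ ∃ P' : Finset (Equiv.Perm (Fin a)), VCDimLE a k P' ∧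
      P.card ≤ q ^ n * (2 * ζ) ^ n * (P'.card * 2 ^ (a + m)) := by
  classical
  obtain ⟨A, _, hA, hcard⟩ := peel hm0 hζ hB n Finset.univ (P.image (blk q)) (by simp)
    (by
      intro f hf j
      obtain ⟨π, _, rfl⟩ := Finset.mem_image.mp hf
      exact hm _)
    (by simp) (dim_blk P hP)
  obtain ⟨P', hP', hc'⟩ := restrict_count P hP hm A
  refine ⟨A.card, hA, P', hP', ?_⟩
  calc P.card ≤ (P.image (blk q)).card * q ^ n := card_blk hq P
    _ ≤ ((2 * ζ) ^ n * (P'.card * 2 ^ (A.card + m))) * q ^ n := by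
        gcongr
        exact hcard.trans (Nat.mul_le_mul_left _ hc')
    _ = _ := by ring

theorem perm_rec {N k ζ K : ℕ} (hk : 1 ≤ k) (hζ : 1 ≤ ζ) (hK : 2 ≤ K)
    (hB : ∀ m ≤ N, ∀ γ : Type, Bd γ (k+1) m ζ ζ) :
    ∀ n ≤ N, ∀ P : Finset (Equiv.Perm (Fin n)), VCDimLE n k P →
      (P.card : ℝ) ≤ ((8 * (4 * ζ * k * K) * ζ : ℕ) : ℝ) ^ ((n:ℝ) * (1 + 2 / (K:ℝ))) := by
  intro n
  induction n using Nat.strong_induction_on with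
  | _ n ih =>
    intro hn P hP
    set q := 4 * ζ * k * K with hq
    have hζk : 1 ≤ ζ * k := Nat.mul_pos hζ hk
    have hq4 : 8 ≤ q := by
      calc 8 = 4 * 1 * 2 := by norm_num
        _ ≤ 4 * (ζ * k) * K := by gcongr
        _ = q := by rw [hq]; ring
    set X := 8 * q * ζ with hX
    have hXq : q ≤ X := by
      calc q = 1 * q * 1 := by ring
        _ ≤ 8 * q * ζ := by gcongr; norm_num
    have hX1 : (1:ℝ) ≤ (X:ℝ) := by
      have : 1 ≤ X := by omega
      exact_mod_cast this
    have hK0 : (0:ℝ) < K := by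
      have : 0 < K := by omega
      exact_mod_cast this
    by_cases hnq : n < q
    · have h1 : P.card ≤ X ^ n := by
        calc P.card ≤ Fintype.card (Equiv.Perm (Fin n)) := Finset.card_le_univ _
          _ = n.factorial := by rw [Fintype.card_perm, Fintype.card_fin]
          _ ≤ n ^ n := Nat.factorial_le_pow n
          _ ≤ X ^ n := Nat.pow_le_pow_left (by omega) _
      calc (P.card : ℝ) ≤ (X:ℝ) ^ n := by exact_mod_cast h1
        _ = (X:ℝ) ^ (n:ℝ) := (Real.rpow_natCast _ _).symm
        _ ≤ _ := by
          apply Real.rpow_le_rpow_of_exponent_le hX1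
          refine le_mul_of_one_le_right (by positivity) ?_
          have : 0 ≤ 2 / (K:ℝ) := by positivity
          linarith
    · set m := n / q + 1 with hm
      have hqm : q * (n / q) ≤ n := Nat.mul_div_le n q
      have hmn : m ≤ n := by
        have : 2 * (n / q) ≤ q * (n/q) := Nat.mul_le_mul_right _ (by omega)
        omega
      obtain ⟨a, ha, P', hP', hcard⟩ := perm_step (n := n) (q := q) (k := k) (m := m) (ζ := ζ)
        (by omega) hζ
        (fun v => by
          have : v.val / q ≤ n / q := Nat.div_le_div_right v.isLt.le
          exact Nat.lt_succ_of_le this) (Nat.succ_pos _) (hB m (hmn.trans hn)) P hP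
      have haK : a * K ≤ n := by
        have h1 : 2 * (a * K) ≤ q * m := by
          calc 2 * (a * K) ≤ 2 * (2 * ζ * k * m * K) := by gcongr
            _ = q * m := by rw [hq]; ring
        have h2 : q * m = q * (n/q) + q := by rw [hm]; ring
        omega
      have han : a < n := by
        have : a * 2 ≤ a * K := Nat.mul_le_mul_left _ hK
        omega
      have hih := ih a han (by omega) P' hP'
      have h2 : P.card ≤ X ^ n * P'.card := by
        calc P.card ≤ q ^ n * (2 * ζ) ^ n * (P'.card * 2 ^ (a + m)) := hcard
          _ ≤ q ^ n * (2 * ζ) ^ n * (P'.card * 2 ^ (n + n)) := by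
            gcongr
            norm_num
          _ = X ^ n * P'.card := by
            have h4 : (2:ℕ) ^ (n + n) = 4 ^ n := by
              rw [← two_mul, pow_mul]
              norm_num
            rw [h4, show X = q * (2 * ζ) * 4 by rw [hX]; ring, mul_pow (q * (2 * ζ)) 4,
              mul_pow q (2 * ζ)]
            ring
      calc (P.card : ℝ) ≤ (X:ℝ) ^ n * P'.card := by exact_mod_cast h2
        _ ≤ (X:ℝ) ^ n * (X:ℝ) ^ ((a:ℝ) * (1 + 2 / (K:ℝ))) := by gcongr
        _ = (X:ℝ) ^ ((n:ℝ) + (a:ℝ) * (1 + 2 / (K:ℝ))) := by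
          rw [Real.rpow_add (by linarith), Real.rpow_natCast]
        _ ≤ _ := by
          apply Real.rpow_le_rpow_of_exponent_le hX1
          have h3 : (a:ℝ) ≤ n / K := by
            rw [le_div_iff₀ hK0]
            exact_mod_cast haK
          have h4 : 2 / (K:ℝ) ≤ 1 := by
            rw [div_le_one hK0]
            exact_mod_cast hK
          calc (n:ℝ) + (a:ℝ) * (1 + 2 / (K:ℝ)) ≤ n + n / K * (1 + 1) := by gcongr
            _ = _ := by ring

theorem final_arith (t k : ℕ) (ht : 2 ≤ t) (C x : ℝ) (hC : 0 ≤ C) (hx : 1 ≤ x) :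
    (1 + 2 / (x+1)) * (2 * (x ^ t / (t.factorial : ℝ) + C * x ^ (t-1)) + x + k + 6) ≤
      (2 / (t.factorial : ℝ)) * x ^ t + (3 * (2 * C + 1 + k + 6) + 4) * x ^ (t-1) := by
  obtain ⟨u, rfl⟩ : ∃ u, t = u + 2 := ⟨t - 2, by omega⟩
  simp only [show u + 2 - 1 = u + 1 by omega]
  have hfp : (1:ℝ) ≤ ((u+2).factorial : ℝ) := by
    exact_mod_cast Nat.one_le_iff_ne_zero.mpr (Nat.factorial_ne_zero _)
  set c : ℝ := 2 * C + 1 + k + 6 with hc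
  have hc0 : 0 ≤ c := by positivity
  have hxp : x ^ (u+2) = x * x ^ (u+1) := by ring
  have hxx : x ≤ x ^ (u+1) := le_self_pow₀ hx (by omega)
  set p := x ^ (u+1) with hp
  have hp1 : 1 ≤ p := hx.trans hxx
  set w : ℝ := x ^ (u+2) / ((u+2).factorial : ℝ) with hw
  have hw0 : 0 ≤ w := by positivity
  have hw1 : w ≤ x * p := by
    rw [← hxp]; exact div_le_self (by positivity) hfp
  have hY : 2 * (w + C * p) + x + k + 6 ≤ 2 * w + c * p := by
    have : (k + 6 : ℝ) ≤ (k+6) * p := le_mul_of_one_le_right (by positivity) hp1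
    rw [hc]
    linarith
  have h2 : 2 / (x+1) ≤ 2 / x := by gcongr; linarith
  have h3 : 2 / x ≤ 2 := by
    rw [div_le_iff₀ (by linarith)]; linarith
  have hx0 : 0 < x := by linarith
  calc _ ≤ (1 + 2 / x) * (2 * w + c * p) := by gcongr
    _ = 2 * w + c * p + (2 / x * 2) * w + 2 / x * (c * p) := by ring
    _ ≤ 2 * w + c * p + (2 / x * 2) * (x * p) + 2 * (c * p) := by gcongr
    _ = 2 * w + (3 * c + 4) * p := by field_simp; ring
    _ = _ := by rw [hw]; ring

end MainProof

theorem r_even_upper_bound :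
    ∀ t : ℕ, 2 ≤ t → ∃ C : ℝ, ∀ n : ℕ, 1 ≤ n →
      ∀ P : Finset (Equiv.Perm (Fin n)), VCDimLE n (2 * t + 2) P →
        (P.card : ℝ) ≤ (2 : ℝ) ^ ((n : ℝ) *
          ((2 / (Nat.factorial t : ℝ)) * (invAck n : ℝ) ^ t
            + C * (invAck n : ℝ) ^ (t - 1))) := by
  intro t ht
  obtain ⟨C, hC, hz⟩ := zeta_bound t ht
  refine ⟨3 * (2 * C + 1 + ((2 * t + 2 : ℕ) : ℝ) + 6) + 4, fun n hn P hP => ?_⟩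
  obtain ⟨ζ, hζ, hζle, hB⟩ := hz n
  have hα := (invAck_spec n).1
  have h1 := perm_rec (N := n) (k := 2 * t + 2) (ζ := ζ) (K := invAck n + 1) (by omega) hζ
    (by omega) hB n le_rfl P hP
  have hx : (1:ℝ) ≤ (invAck n : ℝ) := by exact_mod_cast hα
  have hfin := final_arith t (2 * t + 2) ht C (invAck n) hC hx
  set k := 2 * t + 2 with hk
  set α := invAck n with hαdef
  set Z : ℝ := (α:ℝ) ^ t / (t.factorial : ℝ) + C * (α:ℝ) ^ (t-1) with hZ
  have hX : ((8 * (4 * ζ * k * (α + 1)) * ζ : ℕ) : ℝ) ≤ (2:ℝ) ^ (2 * Z + α + k + 6) := by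
    have e5 : (2:ℝ) ^ (5:ℝ) = 32 := by
      rw [show (5:ℝ) = ((5:ℕ):ℝ) by norm_num, Real.rpow_natCast]; norm_num
    calc ((8 * (4 * ζ * k * (α + 1)) * ζ : ℕ) : ℝ)
        = 32 * (ζ * ζ) * k * ((α + 1 : ℕ) : ℝ) := by push_cast; ring
      _ ≤ (2:ℝ) ^ (5:ℝ) * ((2:ℝ) ^ Z * (2:ℝ) ^ Z) * (2:ℝ) ^ (k:ℝ) * (2:ℝ) ^ ((α+1 : ℕ) : ℝ) := by
        rw [e5]
        gcongr
        · exact cast_le_two_rpow k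
        · exact cast_le_two_rpow (α+1)
      _ = (2:ℝ) ^ (5 + (Z + Z) + k + ((α+1 : ℕ) : ℝ)) := by
        clear_value Z
        simp only [Real.rpow_add (zero_lt_two : (0:ℝ) < 2)]
      _ = _ := by
        congr 1
        push_cast
        ring
  calc (P.card : ℝ) ≤ _ := h1
    _ ≤ ((2:ℝ) ^ (2 * Z + α + k + 6)) ^ ((n:ℝ) * (1 + 2 / ((α + 1 : ℕ) : ℝ))) := by
      apply Real.rpow_le_rpow (by positivity) hX
      positivity
    _ = (2:ℝ) ^ ((n:ℝ) * ((1 + 2 / ((α:ℝ) + 1)) * (2 * Z + α + k + 6))) := by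
      rw [← Real.rpow_mul (by norm_num)]
      congr 1
      push_cast
      ring
    _ ≤ _ := by
      apply Real.rpow_le_rpow_of_exponent_le (by norm_num)
      gcongr
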